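/- arXiv:2110.04436 — 5 statements merged into one kernel-verified Lean document; each statement's English description precedes it below -/
import Mathlib

section
/- Every pencil of conics over k is equivalent to exactly one of the following eight pencils: span{X²−Z², Y²−Z²}; span{YZ, X²−Z²}; span{XY, Z²}; span{XY, XZ−Y²}; span{X², XZ−Y²}; span{XY, XZ}; span{X², XY}; span{X², Y²}. In particular, these eight pencils are pairwise non-equivalent. -/
/-!
**Existence.** The determinant of the Gram matrix is a cubic form on a pencil, so over an
algebraically closed field every pencil contains a degenerate conic (`exists_normalForm`; the
degenerate member comes from an eigenvector). A degenerate conic is a cone over a binary form, hence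
after a change of coordinates it is `X²` or `XY` (`binary_form`, `normalForm_binary`). A second
generator is then reduced by explicit substitutions:

* if the pencil contains `X²`, everything depends on the restriction of the second conic to the
  line `X = 0` (`normalForm_sq`);
* if it contains `XY`, everything depends on whether the second conic passes through the vertex
  `X = Y = 0`, and if so, on how it meets the two lines there (`normalForm_mul`).

**Uniqueness.** Two properties of a form are unchanged by invertible substitutions: being degenerate
(`Singular`) and being the square of a linear form (`IsLinSq`). Counted up to scaling, the numbers
of degenerate members and of squares in the eight normal forms are
`(3, 0), (2, 0), (2, 1), (1, 0), (1, 1), (∞, 0), (∞, 1), (∞, 2)`, which are pairwise different. An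
equivalence induces an invertible linear map of the parameters `(s, t)` of the members `s P + t Q`
that matches these loci (`Equivalent.parameters`), and comparing them at a few parameters excludes
every pair of distinct normal forms (`not_equivalent`).
-/

open MvPolynomial

noncomputable section

namespace Conics

/-- The action of a `3 × 3` matrix on polynomials in `X, Y, Z` by linear
substitution of the variables. -/
def subst {k : Type} [Field k] (g : Matrix (Fin 3) (Fin 3) k) :
    MvPolynomial (Fin 3) k →ₐ[k] MvPolynomial (Fin 3) k :=
  aeval fun i => ∑ j, C (g i j) * X j

/-- Two subspaces of the polynomial ring are equivalent if some invertible linear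
substitution of the variables maps one onto the other. -/
def Equivalent {k : Type} [Field k]
    (E E' : Submodule k (MvPolynomial (Fin 3) k)) : Prop :=
  ∃ g : Matrix (Fin 3) (Fin 3) k, IsUnit g ∧
    Submodule.map (subst g).toLinearMap E = E'

/-- A pencil of conics: a `2`-dimensional subspace of the space `R₂` of
quadratic forms in `X, Y, Z`. -/
def IsPencil {k : Type} [Field k] (U : Submodule k (MvPolynomial (Fin 3) k)) : Prop :=
  U ≤ homogeneousSubmodule (Fin 3) k 2 ∧ Module.finrank k U = 2

/-- The eight normal forms of pencils of conics, with `X = X 0`, `Y = X 1`, `Z = X 2`. -/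
def pencilList (k : Type) [Field k] : Fin 8 → Submodule k (MvPolynomial (Fin 3) k) :=
  ![Submodule.span k {X 0 ^ 2 - X 2 ^ 2, X 1 ^ 2 - X 2 ^ 2},
    Submodule.span k {X 1 * X 2, X 0 ^ 2 - X 2 ^ 2},
    Submodule.span k {X 0 * X 1, X 2 ^ 2},
    Submodule.span k {X 0 * X 1, X 0 * X 2 - X 1 ^ 2},
    Submodule.span k {X 0 ^ 2, X 0 * X 2 - X 1 ^ 2},
    Submodule.span k {X 0 * X 1, X 0 * X 2},
    Submodule.span k {X 0 ^ 2, X 0 * X 1},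
    Submodule.span k {X 0 ^ 2, X 1 ^ 2}]

/-! ### Substitution and equivalence -/

section

variable {k : Type} [Field k]

lemma eval_subst (g : Matrix (Fin 3) (Fin 3) k) (x : Fin 3 → k)
    (F : MvPolynomial (Fin 3) k) : eval x (subst g F) = eval (g.mulVec x) F := by
  have h : (aeval x : MvPolynomial (Fin 3) k →ₐ[k] k).comp (subst g) = aeval (g.mulVec x) := by
    apply MvPolynomial.algHom_ext
    intro i
    simp [subst, Matrix.mulVec, dotProduct]
  have := DFunLike.congr_fun h F
  simpa [aeval_eq_eval] using this

lemma subst_subst [Infinite k] (g h : Matrix (Fin 3) (Fin 3) k) (F : MvPolynomial (Fin 3) k) :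
    subst g (subst h F) = subst (h * g) F := by
  apply MvPolynomial.funext
  intro x
  simp [eval_subst]

lemma subst_one [Infinite k] (F : MvPolynomial (Fin 3) k) : subst 1 F = F := by
  apply MvPolynomial.funext
  intro x
  simp [eval_subst]

lemma Equivalent.trans [Infinite k] {E E' E'' : Submodule k (MvPolynomial (Fin 3) k)}
    (h : Equivalent E E') (h' : Equivalent E' E'') : Equivalent E E'' := by
  obtain ⟨g, hg, rfl⟩ := h
  obtain ⟨g', hg', rfl⟩ := h'
  refine ⟨g * g', hg.mul hg', ?_⟩
  have h : (subst (g * g')).toLinearMap = (subst g').toLinearMap ∘ₗ (subst g).toLinearMap :=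
    LinearMap.ext fun F => (subst_subst g' g F).symm
  rw [h, Submodule.map_comp]

lemma Equivalent.symm [Infinite k] {E E' : Submodule k (MvPolynomial (Fin 3) k)}
    (h : Equivalent E E') : Equivalent E' E := by
  obtain ⟨g, hg, rfl⟩ := h
  obtain ⟨u, rfl⟩ := hg
  refine ⟨(u⁻¹ : _), Units.isUnit _, ?_⟩
  have h : (subst ((u⁻¹ : _) : Matrix (Fin 3) (Fin 3) k)).toLinearMap ∘ₗ
      (subst (u : Matrix (Fin 3) (Fin 3) k)).toLinearMap = LinearMap.id :=
    LinearMap.ext fun F => by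
      change subst _ (subst _ F) = F
      rw [subst_subst, Units.mul_inv, subst_one]
  rw [← Submodule.map_comp, h, Submodule.map_id]

lemma subst_injective [Infinite k] {g : Matrix (Fin 3) (Fin 3) k} (hg : IsUnit g) :
    Function.Injective (subst g) := by
  obtain ⟨u, rfl⟩ := hg
  intro F G h
  simpa [subst_subst, subst_one] using congrArg (subst ((u⁻¹ : _) : Matrix (Fin 3) (Fin 3) k)) h

lemma Equivalent.finrank_eq [Infinite k] {E E' : Submodule k (MvPolynomial (Fin 3) k)}
    (h : Equivalent E E') : Module.finrank k E = Module.finrank k E' := by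
  obtain ⟨g, hg, rfl⟩ := h
  exact (Submodule.equivMapOfInjective _ (subst_injective hg) E).finrank_eq

lemma span_pair_eq (P Q : MvPolynomial (Fin 3) k) {α β γ δ : k} (h : α * δ - β * γ ≠ 0) :
    Submodule.span k {α • P + β • Q, γ • P + δ • Q} = Submodule.span k {P, Q} := by
  obtain ⟨D, hD⟩ : ∃ D, α * δ - β * γ = D := ⟨_, rfl⟩
  rw [hD] at h
  have key : ∀ F, F ∈ Submodule.span k {P, Q} →
      F ∈ Submodule.span k {α • P + β • Q, γ • P + δ • Q} := by
    intro F hF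
    obtain ⟨s, t, rfl⟩ := Submodule.mem_span_pair.1 hF
    refine Submodule.mem_span_pair.2 ⟨(s * δ - t * γ) / D, (t * α - s * β) / D, ?_⟩
    match_scalars
    · field_simp
      linear_combination s * hD
    · field_simp
      linear_combination t * hD
  refine le_antisymm ?_ key
  rw [Submodule.span_le]
  rintro F (rfl | rfl)
  · exact Submodule.mem_span_pair.2 ⟨α, β, rfl⟩
  · exact Submodule.mem_span_pair.2 ⟨γ, δ, rfl⟩

lemma equivalent_subst (g : Matrix (Fin 3) (Fin 3) k) (hg : g.det ≠ 0)
    (P Q : MvPolynomial (Fin 3) k) :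
    Equivalent (Submodule.span k {P, Q}) (Submodule.span k {subst g P, subst g Q}) := by
  refine ⟨g, (Matrix.isUnit_iff_isUnit_det _).2 hg.isUnit, ?_⟩
  rw [Submodule.map_span, Set.image_pair]
  rfl

/-- Equivalence of two spans can be certified pointwise, because polynomials over an infinite
field are determined by their values: the generators `P, Q`, pulled back along `g`, are
combinations of `P', Q'` with invertible coefficient matrix. -/
lemma equivalent_of_eval [Infinite k] (g : Matrix (Fin 3) (Fin 3) k)
    {P Q P' Q' : MvPolynomial (Fin 3) k} (α β γ δ : k) (hg : g.det ≠ 0)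
    (h : α * δ - β * γ ≠ 0)
    (hP : ∀ x, eval (g.mulVec x) P = α * eval x P' + β * eval x Q')
    (hQ : ∀ x, eval (g.mulVec x) Q = γ * eval x P' + δ * eval x Q') :
    Equivalent (Submodule.span k {P, Q}) (Submodule.span k {P', Q'}) := by
  have e := equivalent_subst g hg P Q
  have h1 : subst g P = α • P' + β • Q' := by
    apply MvPolynomial.funext
    intro x
    simp [eval_subst, hP, smul_eval]
  have h2 : subst g Q = γ • P' + δ • Q' := by
    apply MvPolynomial.funext
    intro x
    simp [eval_subst, hQ, smul_eval]
  rwa [h1, h2, span_pair_eq _ _ h] at e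

lemma not_finrank_two (P Q : MvPolynomial (Fin 3) k) (a : k) (h : Q = a • P)
    (hr : Module.finrank k (Submodule.span k {P, Q}) = 2) : False := by
  have : Submodule.span k {P, Q} = Submodule.span k {P} := by
    subst h
    refine le_antisymm ?_ (Submodule.span_mono (by simp))
    rw [Submodule.span_le]
    rintro F (rfl | rfl)
    · exact Submodule.mem_span_singleton_self _
    · exact Submodule.mem_span_singleton.2 ⟨a, rfl⟩
  rw [this] at hr
  have := finrank_span_le_card (R := k) ({P} : Set (MvPolynomial (Fin 3) k))
  simp at this
  omega

/-! ### Quadratic forms by coefficients -/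

/-- The quadratic form `a X² + b XY + c XZ + d Y² + e YZ + f Z²`. -/
def qf (a b c d e f : k) : MvPolynomial (Fin 3) k :=
  C a * X 0 ^ 2 + C b * (X 0 * X 1) + C c * (X 0 * X 2) + C d * X 1 ^ 2
    + C e * (X 1 * X 2) + C f * X 2 ^ 2

lemma eval_qf (a b c d e f : k) (x : Fin 3 → k) : eval x (qf a b c d e f) =
    a * x 0 ^ 2 + b * (x 0 * x 1) + c * (x 0 * x 2) + d * x 1 ^ 2
    + e * (x 1 * x 2) + f * x 2 ^ 2 := by
  simp [qf]

lemma isHomogeneous_qf (a b c d e f : k) : (qf a b c d e f).IsHomogeneous 2 := by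
  have h : ∀ (u : k) (i j : Fin 3), (C u * (X i * X j)).IsHomogeneous 2 := fun u i j =>
    ((isHomogeneous_X k i).mul (isHomogeneous_X k j)).C_mul u
  rw [qf, sq, sq, sq]
  exact (((((h _ _ _).add (h _ _ _)).add (h _ _ _)).add (h _ _ _)).add (h _ _ _)).add (h _ _ _)

lemma exists_qf {F : MvPolynomial (Fin 3) k} (hF : F.IsHomogeneous 2) :
    ∃ a b c d e f, F = qf a b c d e f := by
  have hadd : ∀ s : Finset (Fin 3 →₀ ℕ), (∀ m ∈ s, m.degree = 2) →
      ∃ a b c d e f, ∑ m ∈ s, monomial m (coeff m F) = qf a b c d e f := by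
    intro s
    induction s using Finset.induction_on with
    | empty => intro _; exact ⟨0, 0, 0, 0, 0, 0, by simp [qf]⟩
    | insert m s hm ih =>
      intro h
      obtain ⟨a, b, c, d, e, f, h1⟩ := ih fun n hn => h n (Finset.mem_insert_of_mem hn)
      have h2 := h m (Finset.mem_insert_self _ _)
      rw [Finset.sum_insert hm, h1]
      generalize coeff m F = u
      rw [monomial_eq, Finsupp.prod_fintype _ _ (by simp), Fin.prod_univ_three]
      rw [Finsupp.degree_eq_sum, Fin.sum_univ_three] at h2
      generalize m 0 = p at *
      generalize m 1 = q at *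
      generalize m 2 = r at *
      have hp : p ≤ 2 := by omega
      have hq : q ≤ 2 := by omega
      obtain rfl : r = 2 - p - q := by omega
      clear h h1
      interval_cases p <;> interval_cases q <;> simp at h2 ⊢
      · exact ⟨a, b, c, d, e, f + u, by simp only [qf, C_add]; ring⟩
      · exact ⟨a, b, c, d, e + u, f, by simp only [qf, C_add]; ring⟩
      · exact ⟨a, b, c, d + u, e, f, by simp only [qf, C_add]; ring⟩
      · exact ⟨a, b, c + u, d, e, f, by simp only [qf, C_add]; ring⟩
      · exact ⟨a, b + u, c, d, e, f, by simp only [qf, C_add]; ring⟩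
      · exact ⟨a + u, b, c, d, e, f, by simp only [qf, C_add]; ring⟩
  obtain ⟨a, b, c, d, e, f, h⟩ := hadd F.support fun m hm => by
    by_contra hne
    exact (mem_support_iff.1 hm) (hF.coeff_eq_zero hne)
  exact ⟨a, b, c, d, e, f, by rw [← h, support_sum_monomial_coeff]⟩

lemma subst_qf [Infinite k] (g : Matrix (Fin 3) (Fin 3) k) (a b c d e f : k) :
    ∃ a' b' c' d' e' f', subst g (qf a b c d e f) = qf a' b' c' d' e' f' := by
  -- The coefficients of `x ↦ q (g x)`: values of `q` and of its polar form on the columns of `g`.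
  let B : (Fin 3 → k) → (Fin 3 → k) → k := fun u v =>
    2 * a * (u 0 * v 0) + b * (u 0 * v 1 + u 1 * v 0) + c * (u 0 * v 2 + u 2 * v 0)
      + 2 * d * (u 1 * v 1) + e * (u 1 * v 2 + u 2 * v 1) + 2 * f * (u 2 * v 2)
  refine ⟨eval (g.transpose 0) (qf a b c d e f), B (g.transpose 0) (g.transpose 1), B (g.transpose 0) (g.transpose 2),
    eval (g.transpose 1) (qf a b c d e f), B (g.transpose 1) (g.transpose 2), eval (g.transpose 2) (qf a b c d e f), ?_⟩
  apply MvPolynomial.funext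
  intro x
  rw [eval_subst]
  simp only [eval_qf, B, Matrix.mulVec, dotProduct, Fin.sum_univ_three, Matrix.transpose_apply]
  ring

end

/-! ### Reduction to normal form -/

section

variable {k : Type} [Field k]

/-- The pencil spanned by `P` and `Q` is equivalent to one of the normal forms. -/
def HasNormalForm (P Q : MvPolynomial (Fin 3) k) : Prop :=
  ∃ i : Fin 8, Equivalent (Submodule.span k {P, Q}) (pencilList k i)

lemma HasNormalForm.of_equivalent [Infinite k] {P Q P' Q' : MvPolynomial (Fin 3) k}
    (h : Equivalent (Submodule.span k {P, Q}) (Submodule.span k {P', Q'}))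
    (h' : HasNormalForm P' Q') : HasNormalForm P Q := by
  obtain ⟨i, hi⟩ := h'
  exact ⟨i, h.trans hi⟩

variable [IsAlgClosed k]

lemma exists_sq {a : k} (ha : a ≠ 0) : ∃ r, r ≠ 0 ∧ r ^ 2 = a := by
  obtain ⟨r, hr⟩ := IsAlgClosed.exists_pow_nat_eq a (n := 2) (by norm_num)
  refine ⟨r, ?_, hr⟩
  rintro rfl
  simp at hr
  exact ha hr.symm

variable [CharZero k]

/-- A binary quadratic form over an algebraically closed field is, in suitable coordinates,
`xy`, `x²` or `0`. -/
lemma binary_form (a b c : k) : ∃ p q r s : k, p * s - q * r ≠ 0 ∧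
    ((∀ x y, a * (p * x + q * y) ^ 2 + b * ((p * x + q * y) * (r * x + s * y))
        + c * (r * x + s * y) ^ 2 = x * y) ∨
     (∀ x y, a * (p * x + q * y) ^ 2 + b * ((p * x + q * y) * (r * x + s * y))
        + c * (r * x + s * y) ^ 2 = x ^ 2) ∨
     (a = 0 ∧ b = 0 ∧ c = 0)) := by
  by_cases ha : a = 0
  · subst ha
    by_cases hb : b = 0
    · subst hb
      by_cases hc : c = 0
      · exact ⟨1, 0, 0, 1, by simp, by simp [hc]⟩
      · obtain ⟨m, hm⟩ := IsAlgClosed.exists_pow_nat_eq c (n := 2) (by norm_num)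
        have hm0 : m ≠ 0 := by rintro rfl; simp at hm; exact hc hm.symm
        refine ⟨0, 1, 1 / m, 0, by simp [hm0], Or.inr (Or.inl fun x y => ?_)⟩
        rw [← hm]; field_simp; ring
    · refine ⟨1 / b, -c / b, 0, 1, by simp [hb], Or.inl fun x y => ?_⟩
      field_simp; ring
  · obtain ⟨r, hr⟩ := IsAlgClosed.exists_pow_nat_eq (b ^ 2 - 4 * a * c) (n := 2) (by norm_num)
    obtain ⟨m, hm⟩ := IsAlgClosed.exists_pow_nat_eq a (n := 2) (by norm_num)
    have hm0 : m ≠ 0 := by rintro rfl; simp at hm; exact ha hm.symm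
    by_cases hr0 : r = 0
    · subst hr0
      refine ⟨1 / m, -b / (2 * a), 0, 1, by simp [hm0], Or.inr (Or.inl fun x y => ?_)⟩
      have hc : c = b ^ 2 / (4 * a) := by field_simp; linear_combination hr
      rw [hc, ← hm]; field_simp; ring
    · have hc : c = (b ^ 2 - r ^ 2) / (4 * a) := by field_simp; linear_combination hr
      refine ⟨(b + r) / (2 * r), -(b - r) / (2 * a * r), -a / r, 1 / r, ?_,
        Or.inl fun x y => ?_⟩
      · have : (b + r) / (2 * r) * (1 / r) - -(b - r) / (2 * a * r) * (-a / r) = 1 / r := by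
          field_simp; ring
        rw [this]; simp [hr0]
      · rw [hc]; field_simp; ring

/-- Pencils containing the square of a linear form. -/
lemma normalForm_sq (a b c d e f : k)
    (hr : Module.finrank k (Submodule.span k {X 0 ^ 2, qf a b c d e f}) = 2) :
    HasNormalForm (X 0 ^ 2) (qf a b c d e f) := by
  -- Put the restriction of the second conic to the line `X = 0` in normal form.
  obtain ⟨p, q, r, s, hdet, h⟩ := binary_form d e f
  have step : ∀ d' e' f' : k,
      (∀ x y, d * (p * x + q * y) ^ 2 + e * ((p * x + q * y) * (r * x + s * y))
        + f * (r * x + s * y) ^ 2 = d' * x ^ 2 + e' * (x * y) + f' * y ^ 2) →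
      Equivalent (Submodule.span k {X 0 ^ 2, qf a b c d e f})
        (Submodule.span k {X 0 ^ 2, qf a (b * p + c * r) (b * q + c * s) d' e' f'}) := by
    intro d' e' f' h
    refine equivalent_of_eval !![1, 0, 0; 0, p, q; 0, r, s] 1 0 0 1 ?_ (by simp) ?_ ?_
    · simpa [Matrix.det_fin_three] using hdet
    · intro x
      simp [dotProduct, Fin.sum_univ_three]
    · intro x
      simp only [eval_qf]
      simp [dotProduct, Fin.sum_univ_three]
      linear_combination h (x 1) (x 2)
  rcases h with h | h | ⟨rfl, rfl, rfl⟩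
  · refine .of_equivalent (step 0 1 0 (by simpa using h)) ⟨2, ?_⟩
    generalize b * p + c * r = b'
    generalize b * q + c * s = c'
    refine equivalent_of_eval !![0, 0, 1; 1, 0, -c'; 0, 1, -b'] 0 1 1 (a - b' * c')
      ?_ (by simp) ?_ ?_
    · simp [Matrix.det_fin_three]
    · intro x
      simp [dotProduct, Fin.sum_univ_three]
    · intro x
      simp [eval_qf, dotProduct, Fin.sum_univ_three]
      ring
  · refine .of_equivalent (step 1 0 0 (by simpa using h)) ?_
    generalize b * p + c * r = b'
    generalize b * q + c * s = c'
    by_cases hc : c' = 0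
    · subst hc
      refine ⟨7, equivalent_of_eval !![1, 0, 0; -b' / 2, 1, 0; 0, 0, 1] 1 0 (a - b' ^ 2 / 4) 1
        ?_ (by simp) ?_ ?_⟩
      · simp [Matrix.det_fin_three]
      · intro x
        simp [dotProduct, Fin.sum_univ_three]
      · intro x
        simp [eval_qf, dotProduct, Fin.sum_univ_three]
        ring
    · refine ⟨4, equivalent_of_eval !![1, 0, 0; -b' / 2, 1, 0; 0, 0, -1 / c'] 1 0
        (a - b' ^ 2 / 4) (-1) ?_ (by simp) ?_ ?_⟩
      · simp [Matrix.det_fin_three, hc]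
      · intro x
        simp [dotProduct, Fin.sum_univ_three]
      · intro x
        simp [eval_qf, dotProduct, Fin.sum_univ_three]
        field_simp
        ring
  · by_cases hb : b = 0
    · subst hb
      by_cases hc : c = 0
      · subst hc
        exact (not_finrank_two _ _ a (by simp [qf, smul_eq_C_mul]) hr).elim
      · refine ⟨6, equivalent_of_eval !![1, 0, 0; 0, 0, 1; 0, 1 / c, 0] 1 0 a 1
          ?_ (by simp) ?_ ?_⟩
        · simp [Matrix.det_fin_three, hc]
        · intro x
          simp [dotProduct, Fin.sum_univ_three]
        · intro x
          simp [eval_qf, dotProduct, Fin.sum_univ_three]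
          field_simp
    · refine ⟨6, equivalent_of_eval !![1, 0, 0; 0, 1 / b, -c / b; 0, 0, 1] 1 0 a 1
        ?_ (by simp) ?_ ?_⟩
      · simp [Matrix.det_fin_three, hb]
      · intro x
        simp [dotProduct, Fin.sum_univ_three]
      · intro x
        simp [eval_qf, dotProduct, Fin.sum_univ_three]
        field_simp
        ring

lemma equivalent_swap (a b c d e f : k) :
    Equivalent (Submodule.span k {X 0 * X 1, qf a b c d e f})
      (Submodule.span k {X 0 * X 1, qf d b e a c f}) := by
  refine equivalent_of_eval !![0, 1, 0; 1, 0, 0; 0, 0, 1] 1 0 0 1 ?_ (by simp) ?_ ?_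
  · simp [Matrix.det_fin_three]
  · intro x
    simp [dotProduct, Fin.sum_univ_three, mul_comm]
  · intro x
    simp only [eval_qf]
    simp [dotProduct, Fin.sum_univ_three]
    ring

/-- The line pair `XY` together with a conic not passing through its vertex, after completing
the square in `Z`. -/
lemma normalForm_mul_diag (a d : k) :
    HasNormalForm (X 0 * X 1) (qf a 0 0 d 0 1) := by
  have half : ∀ a : k, a ≠ 0 → HasNormalForm (X 0 * X 1) (qf a 0 0 0 0 1) := by
    intro a ha
    obtain ⟨r, hr0, hr⟩ := exists_sq (neg_ne_zero.2 ha)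
    refine ⟨1, equivalent_of_eval !![0, 0, 1 / r; 0, 1, 0; 1, 0, 0] (1 / r) 0 0 1
      ?_ (by simp [hr0]) ?_ ?_⟩
    · simp [Matrix.det_fin_three, hr0]
    · intro x
      simp [dotProduct, Fin.sum_univ_three]
      ring
    · intro x
      rw [← neg_eq_iff_eq_neg] at hr
      simp [eval_qf, dotProduct, Fin.sum_univ_three, ← hr]
      field_simp
      ring
  by_cases ha : a = 0
  · subst ha
    by_cases hd : d = 0
    · subst hd
      refine ⟨2, equivalent_of_eval 1 1 0 0 1 (by simp) (by simp) ?_ ?_⟩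
      · intro x
        simp
      · intro x
        simp [eval_qf]
    · exact .of_equivalent (equivalent_swap _ _ _ _ _ _) (half d hd)
  · by_cases hd : d = 0
    · subst hd
      exact half a ha
    · obtain ⟨r, hr0, rfl⟩ := exists_sq ha
      obtain ⟨u, hu0, rfl⟩ := exists_sq hd
      obtain ⟨i, hi0, hi⟩ := exists_sq (k := k) (neg_ne_zero.2 one_ne_zero)
      refine ⟨0, equivalent_of_eval
        !![1 / (2 * r), 1 / (2 * r), 0; 1 / (2 * u), -1 / (2 * u), 0; 0, 0, i]
        (1 / (4 * r * u)) (-1 / (4 * r * u)) (1 / 2) (1 / 2) ?_ ?_ ?_ ?_⟩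
      · simp [Matrix.det_fin_three]
        field_simp
        norm_num
        simpa using hi0
      · field_simp
        norm_num
        try simp [hr0, hu0]
      · intro x
        simp [dotProduct, Fin.sum_univ_three]
        field_simp
        ring
      · intro x
        simp [eval_qf, dotProduct, Fin.sum_univ_three, mul_pow, hi]
        field_simp
        ring

/-- Pencils containing the line pair `XY`. -/
lemma normalForm_mul (a b c d e f : k)
    (hr : Module.finrank k (Submodule.span k {X 0 * X 1, qf a b c d e f}) = 2) :
    HasNormalForm (X 0 * X 1) (qf a b c d e f) := by
  by_cases hf : f = 0
  swap
  · refine .of_equivalent (equivalent_of_eval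
      !![1, 0, 0; 0, 1, 0; -c / (2 * f), -e / (2 * f), 1] 1 0 (b - c * e / (2 * f)) f
      ?_ (by simp [hf]) ?_ ?_)
      (normalForm_mul_diag ((a - c ^ 2 / (4 * f)) / f) ((d - e ^ 2 / (4 * f)) / f))
    · simp [Matrix.det_fin_three]
    · intro x
      simp [dotProduct, Fin.sum_univ_three]
    · intro x
      simp [eval_qf, dotProduct, Fin.sum_univ_three]
      field_simp
      ring
  subst hf
  -- One of the two lines is tangent to the second conic at the vertex, or is a component of it.
  have tangent : ∀ a b c d : k, c ≠ 0 → HasNormalForm (X 0 * X 1) (qf a b c d 0 0) := by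
    intro a b c d hc
    by_cases hd : d = 0
    · subst hd
      refine ⟨5, equivalent_of_eval !![1, 0, 0; 0, 1, 0; -a / c, -b / c, 1 / c] 1 0 0 1
        ?_ (by simp) ?_ ?_⟩
      · simp [Matrix.det_fin_three, hc]
      · intro x
        simp [dotProduct, Fin.sum_univ_three]
      · intro x
        simp [eval_qf, dotProduct, Fin.sum_univ_three]
        field_simp
        ring
    · refine ⟨3, equivalent_of_eval !![1, 0, 0; 0, 1, 0; -a / c, -b / c, -d / c] 1 0 0 (-d)
        ?_ (by simp [hd]) ?_ ?_⟩
      · simp [Matrix.det_fin_three, hc, hd]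
      · intro x
        simp [dotProduct, Fin.sum_univ_three]
      · intro x
        simp [eval_qf, dotProduct, Fin.sum_univ_three]
        field_simp
        ring
  have binary : ∀ a b : k, a ≠ 0 → HasNormalForm (X 0 * X 1) (qf a b 0 0 0 0) := by
    intro a b ha
    refine ⟨6, equivalent_of_eval 1 0 1 a b (by simp) (by simpa using ha) ?_ ?_⟩
    · intro x
      simp
    · intro x
      simp [eval_qf]
  by_cases hc : c = 0
  · subst hc
    by_cases he : e = 0
    · subst he
      by_cases ha : a = 0
      · subst ha
        by_cases hd : d = 0
        · subst hd
          exact (not_finrank_two _ _ b (by simp [qf, smul_eq_C_mul]) hr).elim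
        · exact .of_equivalent (equivalent_swap _ _ _ _ _ _) (binary d b hd)
      · by_cases hd : d = 0
        · subst hd
          exact binary a b ha
        · obtain ⟨r, hr0, rfl⟩ := exists_sq ha
          obtain ⟨u, hu0, rfl⟩ := exists_sq hd
          refine ⟨7, equivalent_of_eval
            !![1 / (2 * r), 1 / (2 * r), 0; 1 / (2 * u), -1 / (2 * u), 0; 0, 0, 1]
            (1 / (4 * r * u)) (-1 / (4 * r * u))
            (1 / 2 + b / (4 * r * u)) (1 / 2 - b / (4 * r * u)) ?_ ?_ ?_ ?_⟩
          · simp [Matrix.det_fin_three]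
            field_simp
            norm_num
          · field_simp
            ring_nf
            simp [hr0, hu0]
          · intro x
            simp [dotProduct, Fin.sum_univ_three]
            field_simp
            ring
          · intro x
            simp [eval_qf, dotProduct, Fin.sum_univ_three]
            field_simp
            ring
    · exact .of_equivalent (equivalent_swap _ _ _ _ _ _) (tangent d b e a he)
  · by_cases he : e = 0
    · subst he
      exact tangent a b c d hc
    · refine ⟨1, equivalent_of_eval
        !![-1 / c, 0, 1 / c; 1 / e, 0, 1 / e;
          a / c ^ 2 - d / e ^ 2, 1 / 2, -a / c ^ 2 - d / e ^ 2]
        0 (-1 / (c * e)) 1 (-(b - c * d / e - e * a / c) / (c * e)) ?_ ?_ ?_ ?_⟩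
      · simp [Matrix.det_fin_three]
        field_simp
        norm_num
      · field_simp
        simp [hc, he]
      · intro x
        simp [dotProduct, Fin.sum_univ_three]
        field_simp
        ring
      · intro x
        simp [eval_qf, dotProduct, Fin.sum_univ_three]
        field_simp
        ring

/-- A pencil containing a binary form `a X² + b XY + d Y²`. -/
lemma normalForm_binary (a b d : k) {G : MvPolynomial (Fin 3) k} (hG : G.IsHomogeneous 2)
    (hr : Module.finrank k (Submodule.span k {qf a b 0 d 0 0, G}) = 2) :
    HasNormalForm (qf a b 0 d 0 0) G := by
  obtain ⟨a', b', c', d', e', f', rfl⟩ := exists_qf hG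
  obtain ⟨p, q, r, s, hdet, h⟩ := binary_form a b d
  set g : Matrix (Fin 3) (Fin 3) k := !![p, q, 0; r, s, 0; 0, 0, 1] with hg
  have hgdet : g.det ≠ 0 := by simpa [hg, Matrix.det_fin_three] using hdet
  have key := equivalent_subst g hgdet (qf a b 0 d 0 0) (qf a' b' c' d' e' f')
  obtain ⟨a'', b'', c'', d'', e'', f'', h''⟩ := subst_qf g a' b' c' d' e' f'
  rw [h''] at key
  have hev : ∀ x, eval x (subst g (qf a b 0 d 0 0)) = a * (p * x 0 + q * x 1) ^ 2
      + b * ((p * x 0 + q * x 1) * (r * x 0 + s * x 1)) + d * (r * x 0 + s * x 1) ^ 2 := by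
    intro x
    simp [hg, eval_subst, eval_qf, dotProduct, Fin.sum_univ_three]
  rcases h with h | h | ⟨rfl, rfl, rfl⟩
  · have h1 : subst g (qf a b 0 d 0 0) = X 0 * X 1 :=
      MvPolynomial.funext fun x => by rw [hev, h]; simp
    rw [h1] at key
    exact .of_equivalent key (normalForm_mul _ _ _ _ _ _ (key.finrank_eq ▸ hr))
  · have h1 : subst g (qf a b 0 d 0 0) = X 0 ^ 2 :=
      MvPolynomial.funext fun x => by rw [hev, h]; simp
    rw [h1] at key
    exact .of_equivalent key (normalForm_sq _ _ _ _ _ _ (key.finrank_eq ▸ hr))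
  · rw [Set.pair_comm] at hr
    exact (not_finrank_two _ _ 0 (by simp [qf]) hr).elim

/-- A pencil containing a form whose Gram matrix kills a vector `v ≠ 0`: moving `v` to the
third basis vector eliminates the variable `Z` from that form. -/
lemma normalForm_of_singular (a b c d e f : k) {G : MvPolynomial (Fin 3) k}
    (hG : G.IsHomogeneous 2)
    (hr : Module.finrank k (Submodule.span k {qf a b c d e f, G}) = 2)
    (v : Fin 3 → k) (hv : v ≠ 0) (h0 : 2 * a * v 0 + b * v 1 + c * v 2 = 0)
    (h1 : b * v 0 + 2 * d * v 1 + e * v 2 = 0) (h2 : c * v 0 + e * v 1 + 2 * f * v 2 = 0) :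
    HasNormalForm (qf a b c d e f) G := by
  obtain ⟨a₁, b₁, c₁, d₁, e₁, f₁, rfl⟩ := exists_qf hG
  have main : ∀ (g : Matrix (Fin 3) (Fin 3) k) (p q r : k), g.det ≠ 0 →
      (∀ x, eval (g.mulVec x) (qf a b c d e f) = eval x (qf p q 0 r 0 0)) →
      HasNormalForm (qf a b c d e f) (qf a₁ b₁ c₁ d₁ e₁ f₁) := by
    intro g p q r hg h
    have key := equivalent_subst g hg (qf a b c d e f) (qf a₁ b₁ c₁ d₁ e₁ f₁)
    have h1 : subst g (qf a b c d e f) = qf p q 0 r 0 0 :=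
      MvPolynomial.funext fun x => by rw [eval_subst, h]
    obtain ⟨a₂, b₂, c₂, d₂, e₂, f₂, h₂⟩ := subst_qf g a₁ b₁ c₁ d₁ e₁ f₁
    rw [h1, h₂] at key
    refine .of_equivalent key (normalForm_binary p q r ?_ (key.finrank_eq ▸ hr))
    exact isHomogeneous_qf _ _ _ _ _ _
  by_cases hv0 : v 0 = 0
  · by_cases hv1 : v 1 = 0
    · have hv2 : v 2 ≠ 0 := by
        intro hv2
        apply hv
        ext i
        fin_cases i <;> assumption
      refine main !![1, 0, v 0; 0, 1, v 1; 0, 0, v 2] a b d ?_ fun x => ?_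
      · simpa [Matrix.det_fin_three] using hv2
      · simp [eval_qf, dotProduct, Fin.sum_univ_three]
        linear_combination (x 0 * x 2 + v 0 * x 2 ^ 2 / 2) * h0 +
          (x 1 * x 2 + v 1 * x 2 ^ 2 / 2) * h1 + (v 2 * x 2 ^ 2 / 2) * h2
    · refine main !![1, 0, v 0; 0, 0, v 1; 0, 1, v 2] a c f ?_ fun x => ?_
      · simpa [Matrix.det_fin_three] using hv1
      · simp [eval_qf, dotProduct, Fin.sum_univ_three]
        linear_combination (x 0 * x 2 + v 0 * x 2 ^ 2 / 2) * h0 +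
          (v 1 * x 2 ^ 2 / 2) * h1 + (x 1 * x 2 + v 2 * x 2 ^ 2 / 2) * h2
  · refine main !![0, 0, v 0; 1, 0, v 1; 0, 1, v 2] d e f ?_ fun x => ?_
    · simpa [Matrix.det_fin_three] using hv0
    · simp [eval_qf, dotProduct, Fin.sum_univ_three]
      linear_combination (v 0 * x 2 ^ 2 / 2) * h0 +
          (x 0 * x 2 + v 1 * x 2 ^ 2 / 2) * h1 + (x 1 * x 2 + v 2 * x 2 ^ 2 / 2) * h2

/-- The Gram matrix of the polar form of `qf a b c d e f`. -/
def gram (a b c d e f : k) : Matrix (Fin 3) (Fin 3) k := !![2 * a, b, c; b, 2 * d, e; c, e, 2 * f]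

theorem exists_normalForm (U : Submodule k (MvPolynomial (Fin 3) k)) (hU : IsPencil U) :
    ∃ i, Equivalent U (pencilList k i) := by
  obtain ⟨hU2, hr⟩ := hU
  obtain ⟨P, Q, rfl⟩ : ∃ P Q, U = Submodule.span k {P, Q} := by
    have : Module.Finite k U := Module.finite_of_finrank_pos (by omega)
    let B := Module.finBasisOfFinrankEq k U hr
    refine ⟨B 0, B 1, ?_⟩
    have h := congrArg (Submodule.map U.subtype) B.span_eq
    rw [Submodule.map_span, Submodule.map_subtype_top] at h
    refine h.symm.trans (congrArg _ ?_)
    ext F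
    simp [Fin.exists_fin_two, eq_comm]
  have hP : P.IsHomogeneous 2 := hU2 (Submodule.subset_span (by simp))
  have hQ : Q.IsHomogeneous 2 := hU2 (Submodule.subset_span (by simp))
  obtain ⟨a, b, c, d, e, f, rfl⟩ := exists_qf hP
  obtain ⟨a', b', c', d', e', f', rfl⟩ := exists_qf hQ
  by_cases hdet : (gram a' b' c' d' e' f').det = 0
  · obtain ⟨v, hv, h⟩ := Matrix.exists_mulVec_eq_zero_iff.2 hdet
    rw [Set.pair_comm] at hr ⊢
    have h0 := congrFun h 0
    have h1 := congrFun h 1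
    have h2 := congrFun h 2
    simp [gram, dotProduct, Fin.sum_univ_three] at h0 h1 h2
    exact normalForm_of_singular _ _ _ _ _ _ hP hr v hv h0 h1 h2
  · -- An eigenvector of `B⁻¹ A` with eigenvalue `t` is killed by the Gram matrix `A - t B`.
    obtain ⟨t, ht⟩ := Module.End.exists_eigenvalue (Matrix.toLin'
      ((gram a' b' c' d' e' f')⁻¹ * gram a b c d e f))
    obtain ⟨v, hv⟩ := ht.exists_hasEigenvector
    have h : (gram a b c d e f).mulVec v = t • (gram a' b' c' d' e' f').mulVec v := by
      have := congrArg (gram a' b' c' d' e' f').mulVec hv.apply_eq_smul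
      rwa [Matrix.toLin'_apply, Matrix.mulVec_mulVec, ← Matrix.mul_assoc,
        Matrix.mul_nonsing_inv _ (isUnit_iff_ne_zero.2 hdet), Matrix.one_mul,
        Matrix.mulVec_smul] at this
    have hF : qf (a - t * a') (b - t * b') (c - t * c') (d - t * d') (e - t * e') (f - t * f') =
        (1 : k) • qf a b c d e f + (-t) • qf a' b' c' d' e' f' := by
      simp only [qf, smul_eq_C_mul, map_sub, map_mul, map_neg, map_one]
      ring
    have hspan := span_pair_eq (qf a b c d e f) (qf a' b' c' d' e' f')
      (α := 1) (β := -t) (γ := 0) (δ := 1) (by simp)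
    rw [← hF, zero_smul, zero_add, one_smul] at hspan
    rw [← hspan] at hr ⊢
    have h0 := congrFun h 0
    have h1 := congrFun h 1
    have h2 := congrFun h 2
    simp [gram, dotProduct, Fin.sum_univ_three] at h0 h1 h2
    refine normalForm_of_singular _ _ _ _ _ _ hQ hr v hv.2 ?_ ?_ ?_
    · linear_combination h0
    · linear_combination h1
    · linear_combination h2

end

/-! ### Invariants of the normal forms -/

section

variable {k : Type} [Field k]

/-- The first generator of each normal form, as listed in `pencilList`. -/
def gen₁ (k : Type) [Field k] : Fin 8 → MvPolynomial (Fin 3) k :=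
  ![X 0 ^ 2 - X 2 ^ 2, X 1 * X 2, X 0 * X 1, X 0 * X 1, X 0 ^ 2, X 0 * X 1, X 0 ^ 2, X 0 ^ 2]

/-- The second generator of each normal form, as listed in `pencilList`. -/
def gen₂ (k : Type) [Field k] : Fin 8 → MvPolynomial (Fin 3) k :=
  ![X 1 ^ 2 - X 2 ^ 2, X 0 ^ 2 - X 2 ^ 2, X 2 ^ 2, X 0 * X 2 - X 1 ^ 2, X 0 * X 2 - X 1 ^ 2,
    X 0 * X 2, X 0 * X 1, X 1 ^ 2]

lemma pencilList_eq (i : Fin 8) :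
    pencilList k i = Submodule.span k {gen₁ k i, gen₂ k i} := by
  fin_cases i <;> rfl

/-- The polynomial is invariant under translation by a nonzero vector. In characteristic
other than two, a quadratic form has this property exactly when it is degenerate. -/
def Singular (F : MvPolynomial (Fin 3) k) : Prop :=
  ∃ v : Fin 3 → k, v ≠ 0 ∧ ∀ x, eval (x + v) F = eval x F

/-- The polynomial is the square of a linear form (possibly zero), expressed through values. -/
def IsLinSq (F : MvPolynomial (Fin 3) k) : Prop :=
  ∃ l : Fin 3 → k, ∀ x, eval x F = (l ⬝ᵥ x) ^ 2

lemma singular_subst {g : Matrix (Fin 3) (Fin 3) k} (hg : IsUnit g)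
    (F : MvPolynomial (Fin 3) k) : Singular (subst g F) ↔ Singular F := by
  obtain ⟨u, rfl⟩ := hg
  constructor
  · rintro ⟨v, hv, h⟩
    refine ⟨(u : Matrix (Fin 3) (Fin 3) k).mulVec v, fun h0 => hv ?_, fun x => ?_⟩
    · simpa using congrArg ((u⁻¹ : _) : Matrix (Fin 3) (Fin 3) k).mulVec h0
    · simpa [eval_subst, Matrix.mulVec_add] using
        h (((u⁻¹ : _) : Matrix (Fin 3) (Fin 3) k).mulVec x)
  · rintro ⟨v, hv, h⟩
    refine ⟨((u⁻¹ : _) : Matrix (Fin 3) (Fin 3) k).mulVec v, fun h0 => hv ?_, fun x => ?_⟩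
    · simpa using congrArg (u : Matrix (Fin 3) (Fin 3) k).mulVec h0
    · simp [eval_subst, Matrix.mulVec_add, h]

lemma isLinSq_subst {g : Matrix (Fin 3) (Fin 3) k} (hg : IsUnit g)
    (F : MvPolynomial (Fin 3) k) : IsLinSq (subst g F) ↔ IsLinSq F := by
  obtain ⟨u, rfl⟩ := hg
  constructor
  · rintro ⟨l, h⟩
    refine ⟨Matrix.vecMul l ((u⁻¹ : _) : Matrix (Fin 3) (Fin 3) k), fun x => ?_⟩
    rw [← Matrix.dotProduct_mulVec, ← h]
    simp [eval_subst]
  · rintro ⟨l, h⟩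
    refine ⟨Matrix.vecMul l (u : Matrix (Fin 3) (Fin 3) k), fun x => ?_⟩
    rw [← Matrix.dotProduct_mulVec, ← h, eval_subst]

/-- A polynomial in `(s, t)` that vanishes exactly when the member `s P + t Q` of the normal form is
singular: the discriminant of the pencil without its constant and repeated factors. -/
def singEq (k : Type) [Field k] (s t : k) : Fin 8 → k :=
  ![s * t * (s + t), s * t, s * t, t, t, 0, 0, 0]

/-- The condition on `(s, t)` for `s P + t Q` to be the square of a linear form. -/
def SqCond (k : Type) [Field k] (s t : k) : Fin 8 → Prop :=
  ![s = 0 ∧ t = 0, s = 0 ∧ t = 0, s = 0, s = 0 ∧ t = 0, t = 0, s = 0 ∧ t = 0, t = 0, s * t = 0]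

lemma singular_iff [CharZero k] (i : Fin 8) (s t : k) :
    Singular (s • gen₁ k i + t • gen₂ k i) ↔ singEq k s t i = 0 := by
  constructor
  · rintro ⟨v, hv, h⟩
    have h0 := h 0
    have h1 := h ![1, 0, 0]
    have h2 := h ![0, 1, 0]
    have h3 := h ![0, 0, 1]
    have hv' : ¬ (v 0 = 0 ∧ v 1 = 0 ∧ v 2 = 0) := by
      rintro ⟨h0, h1, h2⟩
      apply hv
      ext i
      fin_cases i <;> assumption
    clear h hv
    fin_cases i <;> simp [gen₁, gen₂, smul_eval, -Matrix.add_cons, -Matrix.cons_add, singEq] at * <;> grind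
  · intro h
    have mk : ∀ F : MvPolynomial (Fin 3) k, ∀ p q r : k, ¬ (p = 0 ∧ q = 0 ∧ r = 0) →
        (∀ x, eval (x + ![p, q, r]) F = eval x F) → Singular F := by
      intro F p q r hne h
      refine ⟨_, fun h0 => hne ?_, h⟩
      exact ⟨congrFun h0 0, congrFun h0 1, congrFun h0 2⟩
    fin_cases i <;> simp [singEq] at h
    · rcases h with (rfl | rfl) | h
      · exact mk _ 1 0 0 (by simp) fun x => by simp [gen₁, gen₂, smul_eval, -Matrix.add_cons, -Matrix.cons_add]
      · exact mk _ 0 1 0 (by simp) fun x => by simp [gen₁, gen₂, smul_eval, -Matrix.add_cons, -Matrix.cons_add]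
      · exact mk _ 0 0 1 (by simp) fun x => by
          simp [gen₁, gen₂, smul_eval, -Matrix.add_cons, -Matrix.cons_add]
          linear_combination (-(2 * x 2 + 1)) * h
    · rcases h with rfl | rfl
      · exact mk _ 0 1 0 (by simp) fun x => by simp [gen₁, gen₂, smul_eval, -Matrix.add_cons, -Matrix.cons_add]
      · exact mk _ 1 0 0 (by simp) fun x => by simp [gen₁, gen₂, smul_eval, -Matrix.add_cons, -Matrix.cons_add]
    · rcases h with rfl | rfl
      · exact mk _ 0 1 0 (by simp) fun x => by simp [gen₁, gen₂, smul_eval, -Matrix.add_cons, -Matrix.cons_add]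
      · exact mk _ 0 0 1 (by simp) fun x => by simp [gen₁, gen₂, smul_eval, -Matrix.add_cons, -Matrix.cons_add]
    · exact mk _ 0 0 1 (by simp) fun x => by simp [gen₁, gen₂, smul_eval, -Matrix.add_cons, -Matrix.cons_add, h]
    · exact mk _ 0 0 1 (by simp) fun x => by simp [gen₁, gen₂, smul_eval, -Matrix.add_cons, -Matrix.cons_add, h]
    · by_cases hs : s = 0 ∧ t = 0
      · exact mk _ 0 0 1 (by simp) fun x => by simp [gen₁, gen₂, -Matrix.add_cons, -Matrix.cons_add, hs]
      · exact mk _ 0 t (-s) (by simpa [and_comm] using hs) fun x => by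
          simp [gen₁, gen₂, smul_eval, -Matrix.add_cons, -Matrix.cons_add]
          ring
    · exact mk _ 0 0 1 (by simp) fun x => by simp [gen₁, gen₂, smul_eval, -Matrix.add_cons, -Matrix.cons_add]
    · exact mk _ 0 0 1 (by simp) fun x => by simp [gen₁, gen₂, smul_eval, -Matrix.add_cons, -Matrix.cons_add]

lemma isLinSq_iff [IsAlgClosed k] [CharZero k] (i : Fin 8) (s t : k) :
    IsLinSq (s • gen₁ k i + t • gen₂ k i) ↔ SqCond k s t i := by
  constructor
  · rintro ⟨l, h⟩
    have h1 := h ![1, 0, 0]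
    have h2 := h ![0, 1, 0]
    have h3 := h ![0, 0, 1]
    have h4 := h ![1, 1, 0]
    have h5 := h ![1, 0, 1]
    have h6 := h ![0, 1, 1]
    clear h
    fin_cases i <;>
      simp [gen₁, gen₂, smul_eval, SqCond, dotProduct, Fin.sum_univ_three] at * <;> grind
  · intro h
    obtain ⟨p, hp⟩ := IsAlgClosed.exists_pow_nat_eq s (n := 2) (by norm_num)
    obtain ⟨q, hq⟩ := IsAlgClosed.exists_pow_nat_eq t (n := 2) (by norm_num)
    fin_cases i <;> simp [SqCond] at h
    · exact ⟨0, fun x => by simp [h]⟩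
    · exact ⟨0, fun x => by simp [h]⟩
    · exact ⟨![0, 0, q], fun x => by
        simp [h, smul_eval, gen₁, gen₂, dotProduct, Fin.sum_univ_three, mul_pow, hq]⟩
    · exact ⟨0, fun x => by simp [h]⟩
    · exact ⟨![p, 0, 0], fun x => by
        simp [h, smul_eval, gen₁, gen₂, dotProduct, Fin.sum_univ_three, mul_pow, hp]⟩
    · exact ⟨0, fun x => by simp [h]⟩
    · exact ⟨![p, 0, 0], fun x => by
        simp [h, smul_eval, gen₁, gen₂, dotProduct, Fin.sum_univ_three, mul_pow, hp]⟩
    · rcases h with rfl | rfl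
      · exact ⟨![0, q, 0], fun x => by
          simp [smul_eval, gen₁, gen₂, dotProduct, Fin.sum_univ_three, mul_pow, hq]⟩
      · exact ⟨![p, 0, 0], fun x => by
          simp [smul_eval, gen₁, gen₂, dotProduct, Fin.sum_univ_three, mul_pow, hp]⟩

lemma gen_independent (i : Fin 8) (s t : k) (h : s • gen₁ k i + t • gen₂ k i = 0) :
    s = 0 ∧ t = 0 := by
  have h1 := congrArg (eval ![1, 0, 0]) h
  have h2 := congrArg (eval ![0, 1, 0]) h
  have h3 := congrArg (eval ![0, 0, 1]) h
  have h4 := congrArg (eval ![1, 1, 0]) h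
  have h5 := congrArg (eval ![1, 0, 1]) h
  have h6 := congrArg (eval ![0, 1, 1]) h
  clear h
  fin_cases i <;> simp [gen₁, gen₂, smul_eval] at * <;> grind

/-- An equivalence between two normal forms induces an invertible linear map of the parameters
`(s, t)` that respects singular members and squares. -/
lemma Equivalent.parameters [IsAlgClosed k] [CharZero k] {i j : Fin 8}
    (h : Equivalent (pencilList k i) (pencilList k j)) :
    ∃ α β γ δ : k, α * δ - β * γ ≠ 0 ∧
      (∀ s t, singEq k s t i = 0 ↔ singEq k (α * s + γ * t) (β * s + δ * t) j = 0) ∧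
      (∀ s t, SqCond k s t i ↔ SqCond k (α * s + γ * t) (β * s + δ * t) j) := by
  obtain ⟨g, hg, h⟩ := h
  have mem : ∀ F ∈ pencilList k i, ∃ α β : k, α • gen₁ k j + β • gen₂ k j = subst g F := by
    intro F hF
    have : subst g F ∈ pencilList k j := h ▸ Submodule.mem_map_of_mem hF
    rw [pencilList_eq] at this
    exact Submodule.mem_span_pair.1 this
  rw [pencilList_eq i] at mem
  obtain ⟨α, β, h1⟩ := mem (gen₁ k i) (Submodule.subset_span (by simp))
  obtain ⟨γ, δ, h2⟩ := mem (gen₂ k i) (Submodule.subset_span (by simp))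
  have key : ∀ s t : k, subst g (s • gen₁ k i + t • gen₂ k i) =
      (α * s + γ * t) • gen₁ k j + (β * s + δ * t) • gen₂ k j := by
    intro s t
    rw [map_add, map_smul, map_smul, ← h1, ← h2]
    module
  have inj : ∀ s t : k, α * s + γ * t = 0 → β * s + δ * t = 0 → s = 0 ∧ t = 0 := by
    intro s t hs ht
    refine gen_independent i s t (subst_injective hg ?_)
    rw [key, hs, ht]
    simp
  refine ⟨α, β, γ, δ, fun hD => ?_, fun s t => ?_, fun s t => ?_⟩
  · have hA := inj δ (-β) (by linear_combination hD) (by ring)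
    have hB := inj γ (-α) (by ring) (by linear_combination -hD)
    have := inj 1 0 (by linear_combination -hB.2) (by linear_combination -hA.2)
    simp at this
  · rw [← singular_iff, ← singular_iff, ← key, singular_subst hg]
  · rw [← isLinSq_iff, ← isLinSq_iff, ← key, isLinSq_subst hg]

/-- Ranks the normal forms by the number of singular members up to scaling, then by the number of
squares of linear forms among them up to scaling. -/
def complexity : Fin 8 → ℕ := ![4, 2, 3, 0, 1, 5, 6, 7]

lemma not_equivalent_of_lt [IsAlgClosed k] [CharZero k] (i j : Fin 8)
    (hij : complexity j < complexity i) : ¬ Equivalent (pencilList k i) (pencilList k j) := by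
  intro h
  obtain ⟨α, β, γ, δ, hD, h1, h2⟩ := h.parameters
  -- These four parameters include all special members of pencils with finitely many of them.
  have a1 := h1 1 0
  have a2 := h1 0 1
  have a3 := h1 1 (-1)
  have a4 := h1 1 1
  have b1 := h2 1 0
  have b2 := h2 0 1
  clear h h1 h2
  fin_cases i <;> fin_cases j <;> simp [complexity] at hij <;>
    simp [singEq, SqCond] at a1 a2 a3 a4 b1 b2 <;> grind

lemma not_equivalent [IsAlgClosed k] [CharZero k] (i j : Fin 8) (hij : i ≠ j) :
    ¬ Equivalent (pencilList k i) (pencilList k j) := by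
  have hne : complexity i ≠ complexity j := by
    revert i j
    decide
  rcases lt_or_gt_of_ne hne with h | h
  · exact fun e => not_equivalent_of_lt j i h e.symm
  · exact not_equivalent_of_lt i j h

end

/-- Every pencil of conics is equivalent to exactly one of the eight normal forms;
in particular the eight normal forms are pairwise non-equivalent. -/
theorem pencil_classification (k : Type) [Field k] [IsAlgClosed k] [CharZero k] :
    (∀ U : Submodule k (MvPolynomial (Fin 3) k), IsPencil U →
      ∃! i : Fin 8, Equivalent U (pencilList k i)) ∧
    (∀ i j : Fin 8, i ≠ j → ¬ Equivalent (pencilList k i) (pencilList k j)) := by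
  refine ⟨fun U hU => ?_, not_equivalent⟩
  obtain ⟨i, hi⟩ := exists_normalForm U hU
  refine ⟨i, hi, fun j hj => ?_⟩
  by_contra hne
  exact not_equivalent j i hne (hj.symm.trans hi)

end Conics
end
end

section
/- A pencil of conics U consists entirely of degenerate quadratic forms if and only if either there is a nonzero linear form L dividing every element of U, or there is a nonzero vector p ∈ k³ with M(q)·p = 0 for every q ∈ U. -/
/-!
Let `U` be a pencil all of whose members are degenerate.

If every `M(q)` has zero adjugate, hence rank at most one, the kernels of two matrices spanning the
pencil have dimension at least two in `k³`, so they meet (`common_kernel`).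

Otherwise some `A = M(c)` has nonzero adjugate; let `p` be a nonzero column of it, so `A p = 0`.
The coefficient of `t` in `det (A + t B) = 0` is `tr (adj A * B)`, and `adj A` is a symmetric matrix
of rank one, so `pᵀ B p = 0` for every `B = M(q)` (`adjugate_col_isotropic`). If `B p = 0` for all
`B`, then `p` is a common kernel vector. If `v = B p ≠ 0` for some `B`, then `c` and the form of `B`
span `U`. For `w ⊥ v`, the Gram matrix of `B` on `p, w, u` has determinant
`-(u · v)² (wᵀ B w)`, so `B` vanishes on the plane `v^⊥` (`isotropic_of_orthogonal`). The same
applies to `A + B`, because `(A + B) p = v`, and hence `A` vanishes there too. A quadratic form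
vanishing on `v^⊥` is divisible by the linear form `v · x` (`dvd_of_vanish`).

Conversely, `M(L N) = l nᵀ + n lᵀ` is singular, where `l` and `n` are the linear coefficients of
`L` and `N` (`det_of_dvd`).
-/

open MvPolynomial

noncomputable section

namespace Conics

/-- The `3 × 3` symmetric matrix of second partial derivatives of a quadratic form. -/
def Mmat {k : Type} [Field k] (q : MvPolynomial (Fin 3) k) : Matrix (Fin 3) (Fin 3) k :=
  Matrix.of fun i j => constantCoeff (pderiv i (pderiv j q))

/-- A zero adjugate means that all `2 × 2` minors vanish, including those with repeated rows or
columns. -/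
lemma minors {k : Type} [Field k] {A : Matrix (Fin 3) (Fin 3) k} (h : A.adjugate = 0)
    (i j m l : Fin 3) : A i j * A m l = A i l * A m j := by
  have H : ∀ a b, A.adjugate a b = 0 := fun a b => by rw [h]; rfl
  simp only [Matrix.adjugate_fin_three] at H
  have h00 := H 0 0
  have h01 := H 0 1
  have h02 := H 0 2
  have h10 := H 1 0
  have h11 := H 1 1
  have h12 := H 1 2
  have h20 := H 2 0
  have h21 := H 2 1
  have h22 := H 2 2
  simp at h00 h01 h02 h10 h11 h12 h20 h21 h22
  clear H h
  fin_cases i <;> fin_cases m <;> fin_cases j <;> fin_cases l <;> simp <;> grind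

/-- Each matrix has all its rows proportional to a single vector, and two vectors of `k³` have a
common nonzero orthogonal vector. -/
lemma common_kernel {k : Type} [Field k] {A B : Matrix (Fin 3) (Fin 3) k}
    (hA : A.adjugate = 0) (hB : B.adjugate = 0) :
    ∃ p : Fin 3 → k, p ≠ 0 ∧ A.mulVec p = 0 ∧ B.mulVec p = 0 := by
  have key : ∀ A : Matrix (Fin 3) (Fin 3) k, A.adjugate = 0 →
      ∃ a : Fin 3 → k, ∀ p, a ⬝ᵥ p = 0 → A.mulVec p = 0 := by
    intro A hA
    by_cases h : A = 0
    · exact ⟨0, fun p _ => by simp [h]⟩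
    · obtain ⟨i, j, hij⟩ : ∃ i j, A i j ≠ 0 := by
        by_contra! H
        exact h (Matrix.ext H)
      refine ⟨A i, fun p hp => funext fun m => ?_⟩
      have : A i j * (A.mulVec p m) = A m j * (A i ⬝ᵥ p) := by
        simp only [Matrix.mulVec, dotProduct, Finset.mul_sum]
        refine Finset.sum_congr rfl fun l _ => ?_
        linear_combination p l * minors hA i j m l
      rw [hp, mul_zero] at this
      simpa [hij] using this
  obtain ⟨a, ha⟩ := key A hA
  obtain ⟨b, hb⟩ := key B hB
  have hd : (Matrix.of ![a, b, 0]).det = 0 := by simp [Matrix.det_fin_three]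
  obtain ⟨p, hp, h⟩ := Matrix.exists_mulVec_eq_zero_iff.mpr hd
  exact ⟨p, hp, ha p (congrFun h 0), hb p (congrFun h 1)⟩

/-- The trace is the coefficient of `t` in the cubic polynomial `det (A + t B)`. -/
lemma trace_adjugate_mul {k : Type} [Field k] [CharZero k] {A B : Matrix (Fin 3) (Fin 3) k}
    (h : ∀ t : k, (A + t • B).det = 0) : (A.adjugate * B).trace = 0 := by
  have h0 := h 0
  have h1 := h 1
  have h2 := h 2
  have h3 := h (-1)
  simp only [Matrix.det_fin_three, Matrix.add_apply, Matrix.smul_apply, smul_eq_mul] at h0 h1 h2 h3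
  simp only [Matrix.adjugate_fin_three, Matrix.trace_fin_three, Matrix.mul_apply, Fin.sum_univ_three]
  simp
  -- A cubic's linear coefficient is recovered from its values at `0, 1, 2, -1`.
  have h6 : (6 : k) ≠ 0 := by norm_num
  apply mul_left_cancel₀ h6
  linear_combination 4 * (h1 - h3) - (h2 - 2 * (h1 + h3)) - 3 * h0

/-- Since `adj (adj A) = det A • A = 0`, the symmetric matrix `X = adj A` satisfies
`X i j * X l j = X j j * X i l`, so the value of `B` on the `j`-th column of `X` is
`X j j * tr (X B)`. -/
lemma adjugate_col_isotropic {k : Type} [Field k] [CharZero k]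
    {A B : Matrix (Fin 3) (Fin 3) k} (hA : A.transpose = A) (hB : B.transpose = B)
    (h : ∀ t : k, (A + t • B).det = 0) (j : Fin 3) :
    A.adjugate.col j ⬝ᵥ B.mulVec (A.adjugate.col j) = 0 := by
  have hdet : A.det = 0 := by simpa using h 0
  have h2 : A.adjugate.adjugate = 0 := by
    rw [Matrix.adjugate_adjugate _ (by simp), hdet]
    simp
  have hs : ∀ a b, A.adjugate a b = A.adjugate b a := fun a b => by
    conv_lhs => rw [← hA, ← Matrix.adjugate_transpose]
    rfl
  have hBs : ∀ a b, B a b = B b a := fun a b => congrFun (congrFun hB b) a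
  have ht := trace_adjugate_mul h
  generalize A.adjugate = X at *
  calc X.col j ⬝ᵥ B.mulVec (X.col j) = X j j * (X * B).trace := by
        simp only [dotProduct, Matrix.mulVec, Matrix.trace, Matrix.diag, Matrix.mul_apply,
          Finset.mul_sum, Matrix.col_apply]
        refine Finset.sum_congr rfl fun i _ => Finset.sum_congr rfl fun l _ => ?_
        have := minors h2 i j j l
        rw [hBs l i, hs l j]
        linear_combination B i l * this
    _ = 0 := by rw [ht, mul_zero]

/-- If `p` is isotropic for a degenerate symmetric `D`, then `D` vanishes on the plane orthogonal
to `D p`. -/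
lemma isotropic_of_orthogonal {k : Type} [Field k] {D : Matrix (Fin 3) (Fin 3) k}
    (hD : D.transpose = D) (hdet : D.det = 0) {p w : Fin 3 → k}
    (hp : p ⬝ᵥ D.mulVec p = 0) (hv : D.mulVec p ≠ 0) (hw : D.mulVec p ⬝ᵥ w = 0) :
    w ⬝ᵥ D.mulVec w = 0 := by
  obtain ⟨i, hi⟩ := Function.ne_iff.mp hv
  set u : Fin 3 → k := Pi.single i 1
  have hsym : ∀ x y, x ⬝ᵥ D.mulVec y = y ⬝ᵥ D.mulVec x := fun x y => by
    rw [Matrix.dotProduct_mulVec, ← Matrix.mulVec_transpose, hD, dotProduct_comm]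
  set P : Matrix (Fin 3) (Fin 3) k := Matrix.of ![p, w, u]
  have hG : ∀ a b, (P * D * P.transpose) a b = P a ⬝ᵥ D.mulVec (P b) := fun a b => by
    rw [Matrix.mul_assoc]
    simp only [Matrix.mul_apply, dotProduct, Matrix.mulVec, Matrix.transpose_apply]
  have hdet' : (P * D * P.transpose).det = 0 := by simp [Matrix.det_mul, hdet]
  have hu : u ⬝ᵥ D.mulVec p ≠ 0 := by simpa [u] using hi
  have hwp : w ⬝ᵥ D.mulVec p = 0 := by rw [dotProduct_comm, hw]
  rw [Matrix.det_fin_three] at hdet'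
  have e0 : P 0 = p := rfl
  have e1 : P 1 = w := rfl
  have e2 : P 2 = u := rfl
  simp only [hG, e0, e1, e2] at hdet'
  rw [hsym p w, hsym p u, hp, hwp] at hdet'
  have : (u ⬝ᵥ D.mulVec p) ^ 2 * (w ⬝ᵥ D.mulVec w) = 0 := by linear_combination -hdet'
  simpa [hu] using this

lemma Mmat_add {k : Type} [Field k] (q r : MvPolynomial (Fin 3) k) :
    Mmat (q + r) = Mmat q + Mmat r := by
  ext i j; simp [Mmat]

lemma Mmat_smul {k : Type} [Field k] (c : k) (q : MvPolynomial (Fin 3) k) :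
    Mmat (c • q) = c • Mmat q := by
  ext i j
  simp [Mmat, MvPolynomial.smul_eq_C_mul]

lemma Mmat_transpose {k : Type} [Field k] (q : MvPolynomial (Fin 3) k) : (Mmat q).transpose = Mmat q := by
  ext i j
  -- Partial derivatives commute, as their commutator is a derivation killing the variables.
  have h : ⁅pderiv (R := k) j, pderiv i⁆ = (0 : Derivation k _ _) :=
    MvPolynomial.derivation_ext fun m => by
      simp only [Derivation.commutator_apply, pderiv_X, Derivation.coe_zero, Pi.zero_apply]
      simp only [Pi.single_apply]
      split_ifs <;> simp
  have hq := congrArg (fun D => D q) h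
  simp only [Derivation.commutator_apply, Derivation.coe_zero, Pi.zero_apply, sub_eq_zero] at hq
  simp only [Mmat, Matrix.transpose_apply, Matrix.of_apply, hq]

lemma eq_C_of_isHomogeneous_zero {k : Type} [Field k] {f : MvPolynomial (Fin 3) k}
    (hf : f.IsHomogeneous 0) : f = C (constantCoeff f) := by
  rw [constantCoeff_eq]
  exact totalDegree_eq_zero_iff_eq_C.mp ((totalDegree_zero_iff_isHomogeneous _).mpr hf)

/-- Euler's identity applied twice. -/
lemma two_mul_eval {k : Type} [Field k] {q : MvPolynomial (Fin 3) k}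
    (hq : q ∈ homogeneousSubmodule (Fin 3) k 2) (x : Fin 3 → k) :
    2 * eval x q = x ⬝ᵥ (Mmat q).mulVec x := by
  have hq' : q.IsHomogeneous 2 := hq
  have h1 : ∀ i, eval x (pderiv i q) = ∑ j, x j * Mmat q j i := fun i => by
    have h := (hq'.pderiv (i := i)).sum_X_mul_pderiv
    rw [Nat.add_one_sub_one, one_smul] at h
    rw [← h, map_sum]
    refine Finset.sum_congr rfl fun j _ => ?_
    rw [eq_C_of_isHomogeneous_zero ((hq'.pderiv (i := i)).pderiv (i := j))]
    simp [Mmat]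
  have h := congrArg (eval x) hq'.sum_X_mul_pderiv
  simp only [map_sum, map_mul, eval_X, h1, nsmul_eq_mul, Nat.cast_ofNat, map_ofNat] at h
  rw [← h, Matrix.dotProduct_mulVec, dotProduct_comm]
  rfl

/-- The vector `v i • x - (v ⬝ᵥ x) • eᵢ` is orthogonal to `v`; expanding the vanishing of `D` on it
exhibits `v ⬝ᵥ x` as a factor of the quadratic form of `D`. -/
lemma quadratic_eq_of_vanish {k : Type} [Field k] {D : Matrix (Fin 3) (Fin 3) k}
    (hD : D.transpose = D) {v : Fin 3 → k}
    (h : ∀ w, v ⬝ᵥ w = 0 → w ⬝ᵥ D.mulVec w = 0) (i : Fin 3) (x : Fin 3 → k) :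
    v i ^ 2 * (x ⬝ᵥ D.mulVec x) =
      (v ⬝ᵥ x) * (2 * v i * (D i ⬝ᵥ x) - D i i * (v ⬝ᵥ x)) := by
  have hsym : ∀ x y, x ⬝ᵥ D.mulVec y = y ⬝ᵥ D.mulVec x := fun x y => by
    rw [Matrix.dotProduct_mulVec, ← Matrix.mulVec_transpose, hD, dotProduct_comm]
  have h3 := h (v i • x - (v ⬝ᵥ x) • Pi.single i 1) (by
    simp only [dotProduct_sub, dotProduct_smul, dotProduct_single_one, smul_eq_mul]; ring)
  simp only [Matrix.mulVec_sub, Matrix.mulVec_smul, dotProduct_sub, sub_dotProduct,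
    dotProduct_smul, smul_dotProduct, smul_eq_mul, hsym x (Pi.single i 1)] at h3
  rw [single_one_dotProduct, single_one_dotProduct, Matrix.mulVec_single_one] at h3
  change _ * (_ - _ * (D i ⬝ᵥ x)) - _ * (_ * (D i ⬝ᵥ x) - _ * D i i) = 0 at h3
  linear_combination h3

lemma dvd_of_vanish {k : Type} [Field k] [CharZero k] {q : MvPolynomial (Fin 3) k}
    (hq : q ∈ homogeneousSubmodule (Fin 3) k 2) {v : Fin 3 → k} (hv : v ≠ 0)
    (h : ∀ w, v ⬝ᵥ w = 0 → w ⬝ᵥ (Mmat q).mulVec w = 0) :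
    (∑ i, C (v i) * X i) ∣ q := by
  obtain ⟨i, hi⟩ := Function.ne_iff.mp hv
  have hc : 2 * v i ^ 2 ≠ 0 := mul_ne_zero two_ne_zero (pow_ne_zero 2 hi)
  have key : C (2 * v i ^ 2) * q = (∑ i, C (v i) * X i) * (C (2 * v i) *
      (∑ j, C (Mmat q i j) * X j) - C (Mmat q i i) * ∑ j, C (v j) * X j) := by
    refine MvPolynomial.funext fun x => ?_
    have h2 := two_mul_eval hq x
    have h3 := quadratic_eq_of_vanish (Mmat_transpose q) h i x
    simp only [dotProduct] at h3 h2
    simp only [map_mul, map_sub, map_sum, eval_C, eval_X]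
    rw [← h3, ← h2]
    ring
  have hu : IsUnit (C (2 * v i ^ 2) : MvPolynomial (Fin 3) k) := hc.isUnit.map C
  exact (hu.dvd_mul_left).mp ⟨_, key⟩

/-- The cofactor of `L` need not be assumed homogeneous: only its linear part contributes to the
constant terms of the second derivatives. -/
lemma det_of_dvd {k : Type} [Field k] {L q : MvPolynomial (Fin 3) k}
    (hL : L ∈ homogeneousSubmodule (Fin 3) k 1) (h : L ∣ q) : (Mmat q).det = 0 := by
  have hL' : L.IsHomogeneous 1 := hL
  obtain ⟨N, rfl⟩ := h
  have h0 : constantCoeff L = 0 := by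
    rw [constantCoeff_eq]
    exact hL'.coeff_eq_zero (by simp)
  have h2 : ∀ i j, pderiv i (pderiv j L) = 0 := fun i j => by
    rw [eq_C_of_isHomogeneous_zero (hL'.pderiv (i := j)), pderiv_C]
  have key : ∀ i j, Mmat (L * N) i j = constantCoeff (pderiv i L) * constantCoeff (pderiv j N)
      + constantCoeff (pderiv j L) * constantCoeff (pderiv i N) := fun i j => by
    simp [Mmat, h2, h0]
    ring
  rw [Matrix.det_fin_three]
  simp only [key]
  ring

/-- A pencil of conics consists entirely of degenerate quadratic forms if and only if
either a nonzero linear form `L` divides every element, or a nonzero vector `p ∈ k³`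
is in the kernel of `M(q)` for every element `q`. -/
theorem pencil_degenerate_iff (k : Type) [Field k] [IsAlgClosed k] [CharZero k]
    (U : Submodule k (MvPolynomial (Fin 3) k)) (hU : IsPencil U) :
    (∀ q ∈ U, (Mmat q).det = 0) ↔
      ((∃ L : MvPolynomial (Fin 3) k, L ∈ homogeneousSubmodule (Fin 3) k 1 ∧ L ≠ 0 ∧
          ∀ q ∈ U, L ∣ q) ∨
        (∃ p : Fin 3 → k, p ≠ 0 ∧ ∀ q ∈ U, (Mmat q).mulVec p = 0)) := by
  obtain ⟨hU2, hfin⟩ := hU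
  have hspan : ∀ a ∈ U, ∀ b ∈ U, LinearIndependent k ![a, b] →
      ∀ q ∈ U, ∃ s t : k, s • a + t • b = q := by
    intro a ha b hb hab q hq
    have : FiniteDimensional k U := Module.finite_of_finrank_eq_succ hfin
    have hle : Submodule.span k (Set.range ![a, b]) ≤ U := by
      rw [Submodule.span_le]
      rintro _ ⟨i, rfl⟩
      fin_cases i <;> simp [ha, hb]
    have heq := Submodule.eq_of_le_of_finrank_eq hle (by rw [finrank_span_eq_card hab, hfin]; rfl)
    rw [← heq] at hq
    obtain ⟨s, t, h⟩ := Submodule.mem_span_pair.mp (by simpa [Set.pair_comm b a] using hq :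
      q ∈ Submodule.span k {a, b})
    exact ⟨s, t, h⟩
  constructor
  · intro hdeg
    by_cases hadj : ∀ q ∈ U, (Mmat q).adjugate = 0
    · right
      have : FiniteDimensional k U := Module.finite_of_finrank_eq_succ hfin
      let b := Module.finBasisOfFinrankEq k U hfin
      obtain ⟨p, hp, h0, h1⟩ :=
        common_kernel (hadj _ (b 0).2) (hadj _ (b 1).2)
      refine ⟨p, hp, fun q hq => ?_⟩
      have hsum := congrArg Subtype.val (b.sum_repr ⟨q, hq⟩)
      simp only [Fin.sum_univ_two, Submodule.coe_add, Submodule.coe_smul] at hsum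
      rw [← hsum, Mmat_add, Mmat_smul, Mmat_smul, Matrix.add_mulVec, Matrix.smul_mulVec,
        Matrix.smul_mulVec, h0, h1, smul_zero, smul_zero, add_zero]
    · push Not at hadj
      obtain ⟨c, hc, hadj⟩ := hadj
      obtain ⟨j, hj⟩ : ∃ j, (Mmat c).adjugate.col j ≠ 0 := by
        by_contra! H
        exact hadj (Matrix.ext fun i j => congrFun (H j) i)
      have hiso : ∀ q ∈ U, (Mmat c).adjugate.col j ⬝ᵥ
          (Mmat q).mulVec ((Mmat c).adjugate.col j) = 0 := fun q hq =>
        adjugate_col_isotropic (Mmat_transpose _) (Mmat_transpose q)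
          (fun t => by
            rw [← Mmat_smul, ← Mmat_add]
            exact hdeg _ (U.add_mem hc (U.smul_mem t hq))) j
      have hker : (Mmat c).mulVec ((Mmat c).adjugate.col j) = 0 := by
        have := (Mmat c).mul_adjugate
        rw [hdeg c hc, zero_smul] at this
        exact funext fun i => congrFun (congrFun this i) j
      generalize (Mmat c).adjugate.col j = p at hj hiso hker
      by_cases hall : ∀ q ∈ U, (Mmat q).mulVec p = 0
      · exact Or.inr ⟨p, hj, hall⟩
      left
      push Not at hall
      obtain ⟨b, hb, hv⟩ := hall
      have hc0 : c ≠ 0 := by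
        rintro rfl
        apply hadj
        have : Mmat (0 : MvPolynomial (Fin 3) k) = 0 := by ext; simp [Mmat]
        rw [this]
        simp
      have hlin : LinearIndependent k ![c, b] := by
        rw [LinearIndependent.pair_iff' hc0]
        rintro a rfl
        exact hv (by rw [Mmat_smul, Matrix.smul_mulVec, hker, smul_zero])
      have hBw : ∀ w, (Mmat b).mulVec p ⬝ᵥ w = 0 → w ⬝ᵥ (Mmat b).mulVec w = 0 := fun w hw =>
        isotropic_of_orthogonal (Mmat_transpose _) (hdeg b hb) (hiso b hb) hv hw
      have hcb : (Mmat (c + b)).mulVec p = (Mmat b).mulVec p := by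
        rw [Mmat_add, Matrix.add_mulVec, hker, zero_add]
      have hcbU := U.add_mem hc hb
      have hCw : ∀ w, (Mmat b).mulVec p ⬝ᵥ w = 0 → w ⬝ᵥ (Mmat c).mulVec w = 0 := fun w hw => by
        have := isotropic_of_orthogonal (Mmat_transpose _) (hdeg _ hcbU)
          (hiso _ hcbU) (w := w) (by rwa [hcb]) (by rwa [hcb])
        rwa [Mmat_add, Matrix.add_mulVec, dotProduct_add, hBw w hw, add_zero] at this
      refine ⟨∑ i, C ((Mmat b).mulVec p i) * X i, ?_, ?_, ?_⟩
      · exact Submodule.sum_mem _ fun i _ => (isHomogeneous_C_mul_X _ i)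
      · obtain ⟨i, hi⟩ := Function.ne_iff.mp hv
        intro H
        apply hi
        have := congrArg (eval (Pi.single i 1)) H
        simpa [Pi.single_apply] using this
      · intro q hq
        obtain ⟨s, t, rfl⟩ := hspan c hc b hb hlin q hq
        rw [smul_eq_C_mul, smul_eq_C_mul]
        exact dvd_add ((dvd_of_vanish (hU2 hc) hv hCw).mul_left _)
          ((dvd_of_vanish (hU2 hb) hv hBw).mul_left _)
  · rintro (⟨L, hL, -, h⟩ | ⟨p, hp, h⟩) q hq
    · exact det_of_dvd hL (h q hq)
    · exact Matrix.exists_mulVec_eq_zero_iff.mp ⟨p, hp, h q hq⟩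

end Conics
end
end

section
/- If a net of conics V has smooth discriminant, then there exists a cubic form F ∈ R₃ whose partial derivatives F_X, F_Y, F_Z span V; any two such cubic forms are proportional; and every such F is smooth and is not equivalent to X³+Y³+Z³. -/
/-!
Write a net `V` with basis `v₀, v₁, v₂` as the family of symmetric matrices `Mₘ = M(vₘ)`, and put
`N(a) = ∑ aₘ Mₘ`. By Jacobi's formula the discriminant has partial derivatives
`tr (adj N(a) * Mᵢ)`, so it is singular at every `a ≠ 0` with `rank N(a) ≤ 1`. Also, if `N p = 0`
for a symmetric `N`, then `adj N` is a multiple of `p pᵀ` (`adjugate_rel`).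

*Nondegeneracy* (`eq_zero_of_degenerate`). Let `H` be a cubic whose partials lie in `V` and satisfy
a linear relation with coefficients `c ≠ 0`. By symmetry of third derivatives `c` lies in the kernel
of every Hessian `M(∂ₚH)`, so the vanishing of `adj M(∂ₚH)` is a single quadratic condition on `p`.
It has a nonzero solution `p` in a plane not containing `c`, and smoothness of the discriminant
forces `∂ₚH = 0`. Now all the matrices `M(∂_qH)` kill both `c` and `p`, hence have rank at most one,
and smoothness forces `∂_qH = 0` for every `q`, that is `H = 0`.

*Existence* (`exists_jacobian`). Triples `wᵢ = ∑ Bᵢₘ vₘ` form a `9`-dimensional space, and being a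
gradient amounts to at most `8` independent linear conditions on the second derivatives, since the
divergence of a curl vanishes. A nonzero solution gives a cubic with partials in `V`; these are
independent by nondegeneracy, so they span `V`.

*Uniqueness* (`jacobian_unique`). If `∇G = B ∇F`, let `t` be an eigenvalue of `B`. The partials of
`tF - G` are linearly dependent, so `tF - G = 0` by nondegeneracy.

*Smoothness* (`jacobian_smooth`) and *not Fermat* (`jacobian_not_fermat`). With the partials of `F`
as basis, the discriminant is the Hessian of `F`. At a singular point `p` of `F`, Euler's identity
gives `N(p) p = 0`, so `tr (adj N(p) * M(∂ᵢF))` is proportional to `pᵀ M(∂ᵢF) p = 2 ∂ᵢF(p) = 0`, and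
the Hessian is singular at `p`. If `F(g x)` is a Fermat cubic, then the Hessian matrix of `F` at
`g e₀` has rank at most one, and the Hessian is singular there.
-/

open MvPolynomial

noncomputable section

namespace Conics

/-- Two forms are equivalent if some invertible linear substitution of the variables
carries one to a nonzero scalar multiple of the other. -/
def FormEquiv {k : Type} [Field k] (F G : MvPolynomial (Fin 3) k) : Prop :=
  ∃ g : Matrix (Fin 3) (Fin 3) k, IsUnit g ∧ ∃ c : k, c ≠ 0 ∧ subst g F = c • G

/-- A net of conics: a `3`-dimensional subspace of the space `R₂` of
quadratic forms in `X, Y, Z`. -/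
def IsNet {k : Type} [Field k] (V : Submodule k (MvPolynomial (Fin 3) k)) : Prop :=
  V ≤ homogeneousSubmodule (Fin 3) k 2 ∧ Module.finrank k V = 3

/-- The discriminant cubic `Γ(a,b,c) = det M(a·v₁ + b·v₂ + c·v₃)` of a triple of
quadratic forms, as a polynomial in the variables `a = X 0`, `b = X 1`, `c = X 2`. -/
def disc {k : Type} [Field k] (v : Fin 3 → MvPolynomial (Fin 3) k) :
    MvPolynomial (Fin 3) k :=
  Matrix.det (Matrix.of fun i j => ∑ m, X m * C (Mmat (v m) i j))

/-- A polynomial in three variables is smooth (as a projective plane curve) if the only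
common zero of its three partial derivatives is the origin. -/
def IsSmooth {k : Type} [Field k] (F : MvPolynomial (Fin 3) k) : Prop :=
  ∀ p : Fin 3 → k, (∀ i, eval p (pderiv i F) = 0) → p = 0

/-- A net of conics has smooth discriminant if the discriminant cubic computed from a
basis is a smooth cubic (a condition independent of the chosen basis). -/
def HasSmoothDiscriminant {k : Type} [Field k]
    (V : Submodule k (MvPolynomial (Fin 3) k)) : Prop :=
  ∀ v : Fin 3 → MvPolynomial (Fin 3) k, LinearIndependent k v →
    Submodule.span k (Set.range v) = V → IsSmooth (disc v)

/-! ### Pencils and nets of symmetric matrices -/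

/-- Smoothness of the plane cubic `a ↦ det (∑ aₘ Mₘ)`, its partial derivatives being written as
`tr (adj (∑ aₘ Mₘ) * Mᵢ)` by Jacobi's formula. -/
def SmoothNet {k : Type} [Field k] (M : Fin 3 → Matrix (Fin 3) (Fin 3) k) : Prop :=
  ∀ a : Fin 3 → k, (∀ i, ((∑ m, a m • M m).adjugate * M i).trace = 0) → a = 0

/-- The columns of the adjugate are cross products of rows of `N`, hence proportional to `c`. -/
theorem adjugate_rel_aux {k : Type} [Field k] (N : Matrix (Fin 3) (Fin 3) k) (c : Fin 3 → k)
    (hc : N.mulVec c = 0) (i a b : Fin 3) :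
    c i * N.adjugate a b = c a * N.adjugate i b := by
  have h0 := congrFun hc 0
  have h1 := congrFun hc 1
  have h2 := congrFun hc 2
  simp only [Matrix.mulVec, dotProduct, Fin.sum_univ_three, Pi.zero_apply] at h0 h1 h2
  rw [Matrix.adjugate_fin_three]
  fin_cases i <;> fin_cases a <;> fin_cases b <;> simp <;> grind

/-- A symmetric matrix killed by `c` has adjugate proportional to `c cᵀ`. -/
theorem adjugate_rel {k : Type} [Field k] {N : Matrix (Fin 3) (Fin 3) k} (hN : N.IsSymm)
    {c : Fin 3 → k} (hc : N.mulVec c = 0) (i a b : Fin 3) :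
    c i * c i * N.adjugate a b = c a * c b * N.adjugate i i := by
  have hs : ∀ x y, N.adjugate x y = N.adjugate y x := fun x y => by
    have := congrFun (congrFun (Matrix.adjugate_transpose N) y) x
    rw [hN.eq] at this
    simpa using this
  have e1 := adjugate_rel_aux N c hc i a b
  have e2 := adjugate_rel_aux N c hc i b i
  rw [hs i b] at e1
  linear_combination c i * e1 + c a * e2

theorem adjugate_eq_zero {k : Type} [Field k] {N : Matrix (Fin 3) (Fin 3) k} (hN : N.IsSymm)
    {c : Fin 3 → k} (hc : N.mulVec c = 0) {i : Fin 3} (hi : c i ≠ 0)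
    (h : N.adjugate i i = 0) : N.adjugate = 0 := by
  ext a b
  have := adjugate_rel hN hc i a b
  rw [h, mul_zero] at this
  simpa [hi] using this

theorem adjugate_diag {k : Type} [Field k] (N : Matrix (Fin 3) (Fin 3) k) (i : Fin 3) :
    N.adjugate i i = N (i+1) (i+1) * N (i+2) (i+2) - N (i+1) (i+2) * N (i+2) (i+1) := by
  rw [Matrix.adjugate_fin_three]
  fin_cases i <;> simp [show (2 : Fin 3) + 2 = 1 from rfl, show (2 : Fin 3) + 1 = 0 from rfl]
  ring

/-- Any pencil of matrices over an algebraically closed field has a member whose `i`-th principal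
minor, a binary quadratic form on the pencil, vanishes. -/
theorem exists_isotropic {k : Type} [Field k] [IsAlgClosed k] (P Q : Matrix (Fin 3) (Fin 3) k)
    (i : Fin 3) : ∃ s t : k, (s ≠ 0 ∨ t ≠ 0) ∧ (s • P + t • Q).adjugate i i = 0 := by
  by_cases hP : P.adjugate i i = 0
  · refine ⟨1, 0, Or.inl one_ne_zero, by simpa using hP⟩
  · let f : Polynomial k := Polynomial.C (P.adjugate i i) * Polynomial.X ^ 2
      + Polynomial.C (P (i+1) (i+1) * Q (i+2) (i+2) + Q (i+1) (i+1) * P (i+2) (i+2)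
        - P (i+1) (i+2) * Q (i+2) (i+1) - Q (i+1) (i+2) * P (i+2) (i+1)) * Polynomial.X
      + Polynomial.C (Q.adjugate i i)
    obtain ⟨s, hs⟩ := IsAlgClosed.exists_root f (by
      rw [Polynomial.degree_quadratic hP]; decide)
    refine ⟨s, 1, Or.inr one_ne_zero, ?_⟩
    simp only [f, adjugate_diag, Polynomial.IsRoot, Polynomial.eval_add, Polynomial.eval_mul,
      Polynomial.eval_C, Polynomial.eval_pow, Polynomial.eval_X] at hs
    simp only [adjugate_diag, Matrix.add_apply, Matrix.smul_apply, smul_eq_mul]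
    linear_combination hs

/-- Nondegeneracy of the cubics attached to a smooth net. The symmetry `hB` says that the matrices
`∑ₘ Bᵢₘ Mₘ` are the Hessians of the partials of a cubic; `c` is a linear relation among these
partials. -/
theorem eq_zero_of_degenerate {k : Type} [Field k] [IsAlgClosed k]
    {M : Fin 3 → Matrix (Fin 3) (Fin 3) k} (hM : ∀ m, (M m).IsSymm) (hsm : SmoothNet M)
    (B : Matrix (Fin 3) (Fin 3) k)
    (hB : ∀ i j l, ∑ m, B i m * M m j l = ∑ m, B j m * M m i l)
    {c : Fin 3 → k} (hc0 : c ≠ 0) (hc : Matrix.vecMul c B = 0) : B = 0 := by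
  have hN : ∀ p : Fin 3 → k, (∑ m, (Matrix.vecMul p B) m • M m).IsSymm := fun p => by
    ext a b
    simp only [Matrix.transpose_apply, Matrix.sum_apply, Matrix.smul_apply, (hM _).apply a b]
  -- the contraction of the symmetric tensor along two vectors may be taken in either order
  have hsw : ∀ p q : Fin 3 → k, (∑ m, (Matrix.vecMul p B) m • M m).mulVec q
      = (∑ m, (Matrix.vecMul q B) m • M m).mulVec p := fun p q => by
    have hM' : ∀ m a b, M m a b = M m b a := fun m a b => (hM m).apply b a
    ext a
    have key : ∀ p q : Fin 3 → k, (∑ m, (Matrix.vecMul p B) m • M m).mulVec q a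
        = ∑ l, ∑ i, q l * p i * ∑ m, B i m * M m l a := fun p q => by
      simp only [Matrix.mulVec, Matrix.vecMul, dotProduct, Matrix.sum_apply, Matrix.smul_apply,
        smul_eq_mul, Fin.sum_univ_three, hM' _ a]
      ring
    rw [key, key, Finset.sum_comm]
    refine Finset.sum_congr rfl fun x _ => Finset.sum_congr rfl fun y _ => ?_
    rw [hB]; ring
  have hker : ∀ p, Matrix.vecMul p B = 0 → ∀ q, (∑ m, (Matrix.vecMul q B) m • M m).mulVec p = 0 :=
    fun p hp q => by rw [hsw, hp]; simp
  have hsing : ∀ p : Fin 3 → k, (∑ m, (Matrix.vecMul p B) m • M m).adjugate = 0 →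
      Matrix.vecMul p B = 0 := fun p hp => hsm _ fun i => by rw [hp]; simp
  obtain ⟨i, hi⟩ := Function.ne_iff.mp hc0
  -- a nonzero vector `p` with `p i = 0` at which the pencil has rank at most one
  obtain ⟨s, t, hst, hiso⟩ := exists_isotropic
    (∑ m, B (i+1) m • M m) (∑ m, B (i+2) m • M m) i
  let p : Fin 3 → k := Pi.single (i+1) s + Pi.single (i+2) t
  have hp : Matrix.vecMul p B = 0 := by
    apply hsing
    apply adjugate_eq_zero (hN p) (hker c hc p) hi
    rw [← hiso]
    congr 2
    simp only [p, Matrix.add_vecMul, Matrix.single_vecMul, Finset.smul_sum, smul_smul,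
      ← Finset.sum_add_distrib, ← add_smul]
    rfl
  -- every member of the pencil is now killed by the independent vectors `c` and `p`
  have hall : ∀ q, Matrix.vecMul q B = 0 := fun q => by
    apply hsing
    apply adjugate_eq_zero (hN q) (hker c hc q) hi
    have hq := hker p hp q
    rw [adjugate_diag]
    generalize (∑ m, (Matrix.vecMul q B) m • M m) = N at hq
    have e1 := congrFun hq (i+1)
    have e2 := congrFun hq (i+2)
    simp only [p, Matrix.mulVec_add, Matrix.mulVec_single, Pi.add_apply, Pi.smul_apply,
      Matrix.col_apply, MulOpposite.smul_eq_mul_unop, MulOpposite.unop_op, Pi.zero_apply] at e1 e2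
    rcases hst with h | h
    · refine (mul_eq_zero.mp ?_).resolve_left h
      linear_combination N (i+2) (i+2) * e1 - N (i+1) (i+2) * e2
    · refine (mul_eq_zero.mp ?_).resolve_left h
      linear_combination N (i+1) (i+1) * e2 - N (i+2) (i+1) * e1
  ext a b
  simpa using congrFun (hall (Pi.single a 1)) b

/-! ### Second derivatives of quadrics and the discriminant -/

theorem pderiv_swap {k : Type} [Field k] (i j : Fin 3) (q : MvPolynomial (Fin 3) k) :
    pderiv i (pderiv j q) = pderiv j (pderiv i q) := by
  have h : ⁅(pderiv i : Derivation k (MvPolynomial (Fin 3) k) (MvPolynomial (Fin 3) k)),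
      (pderiv j : Derivation k (MvPolynomial (Fin 3) k) (MvPolynomial (Fin 3) k))⁆ = 0 := by
    apply derivation_ext
    intro l
    rw [Derivation.commutator_apply, pderiv_X, pderiv_X]
    simp only [Pi.single_apply]
    split_ifs <;> simp
  have := congrArg (fun D => D q) h
  simpa [Derivation.commutator_apply, sub_eq_zero] using this

theorem Mmat_isSymm {k : Type} [Field k] (q : MvPolynomial (Fin 3) k) : (Mmat q).IsSymm := by
  ext i j
  simp [Mmat, pderiv_swap i j]

/-- `Mmat` as a linear map. -/
def MmatL (k : Type) [Field k] :
    MvPolynomial (Fin 3) k →ₗ[k] Matrix (Fin 3) (Fin 3) k where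
  toFun := Mmat
  map_add' p q := by ext; simp [Mmat]
  map_smul' c p := by ext; simp [Mmat]

theorem Mmat_sum {k : Type} [Field k] (b : Fin 3 → k) (v : Fin 3 → MvPolynomial (Fin 3) k) :
    Mmat (∑ m, b m • v m) = ∑ m, b m • Mmat (v m) := by
  change MmatL k _ = ∑ m, b m • MmatL k (v m)
  simp

theorem Mmat_pderiv_swap {k : Type} [Field k] (F : MvPolynomial (Fin 3) k) (i j l : Fin 3) :
    Mmat (pderiv i F) j l = Mmat (pderiv j F) i l := by
  simp only [Mmat, Matrix.of_apply]
  rw [pderiv_swap l i, pderiv_swap l j, pderiv_swap i j]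

/-- Euler's identity for the linear form `∂ⱼ q`. -/
theorem pderiv_quadric {k : Type} [Field k] {q : MvPolynomial (Fin 3) k}
    (hq : q.IsHomogeneous 2) (j : Fin 3) :
    pderiv j q = ∑ l, X l * C (Mmat q l j) := by
  have h1 : (pderiv j q).IsHomogeneous 1 := hq.pderiv
  have h := h1.sum_X_mul_pderiv
  rw [one_smul] at h
  conv_lhs => rw [← h]
  refine Finset.sum_congr rfl fun l _ => ?_
  have h0 : (pderiv l (pderiv j q)).IsHomogeneous 0 := h1.pderiv
  rw [← totalDegree_zero_iff_isHomogeneous, totalDegree_eq_zero_iff_eq_C] at h0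
  conv_lhs => rw [h0]
  rfl

/-- Jacobi's formula for the derivative of a determinant, applied to the discriminant. -/
theorem eval_pderiv_disc {k : Type} [Field k] (v : Fin 3 → MvPolynomial (Fin 3) k)
    (a : Fin 3 → k) (i : Fin 3) :
    eval a (pderiv i (disc v)) =
      ((∑ m, a m • Mmat (v m)).adjugate * Mmat (v i)).trace := by
  have hd : ∀ x y, pderiv i (∑ m, X m * C (Mmat (v m) x y)) = C (Mmat (v i) x y) := fun x y => by
    simp [pderiv_X, Pi.single_apply]
  have he : ∀ x y, eval a (∑ m, X m * C (Mmat (v m) x y)) = (∑ m, a m • Mmat (v m)) x y :=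
    fun x y => by simp [Matrix.sum_apply]
  simp only [disc, Matrix.det_fin_three, Matrix.of_apply, map_add, map_sub, pderiv_mul, map_mul,
    hd, he, eval_C]
  rw [Matrix.adjugate_fin_three]
  simp only [Matrix.trace, Matrix.diag, Matrix.mul_apply, Fin.sum_univ_three]
  simp
  ring

/-- The chain rule for linear substitutions. -/
theorem pderiv_subst {k : Type} [Field k] (g : Matrix (Fin 3) (Fin 3) k) (j : Fin 3)
    (F : MvPolynomial (Fin 3) k) :
    pderiv j (subst g F) = ∑ i, C (g i j) * subst g (pderiv i F) := by
  induction F using MvPolynomial.induction_on with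
  | C a => simp [subst]
  | add p q hp hq => simp [hp, hq, mul_add, Finset.sum_add_distrib]
  | mul_X p n hp =>
    have hX : pderiv j (subst g (X n)) = C (g n j) := by
      simp [subst, pderiv_X, Pi.single_apply]
    simp only [map_mul, pderiv_mul, hp, hX, map_add, mul_add, Finset.sum_add_distrib,
      Finset.sum_mul, pderiv_X]
    congr 1
    · exact Finset.sum_congr rfl fun i _ => by ring
    · rw [Finset.sum_eq_single n]
      · simp [mul_comm]
      · intro b _ hb; simp [Ne.symm hb]
      · simp

theorem constantCoeff_subst {k : Type} [Field k] (g : Matrix (Fin 3) (Fin 3) k)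
    (F : MvPolynomial (Fin 3) k) : constantCoeff (subst g F) = constantCoeff F := by
  induction F using MvPolynomial.induction_on with
  | C a => simp [subst]
  | add p q hp hq => simp [hp, hq]
  | mul_X p n hp => simp [subst]

/-! ### Existence and uniqueness of the cubic -/

theorem smoothNet_of_basis {k : Type} [Field k] {V : Submodule k (MvPolynomial (Fin 3) k)}
    (hdisc : HasSmoothDiscriminant V) {v : Fin 3 → MvPolynomial (Fin 3) k}
    (hli : LinearIndependent k v) (hsp : Submodule.span k (Set.range v) = V) :
    SmoothNet fun m => Mmat (v m) := fun a ha =>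
  hdisc v hli hsp a fun i => by rw [eval_pderiv_disc]; exact ha i

theorem Mmat_sum_apply {k : Type} [Field k] {v : Fin 3 → MvPolynomial (Fin 3) k}
    {b : Fin 3 → k} {q : MvPolynomial (Fin 3) k} (h : ∑ m, b m • v m = q) (j l : Fin 3) :
    Mmat q j l = ∑ m, b m * Mmat (v m) j l := by
  rw [← h, Mmat_sum]
  simp [Matrix.sum_apply]

theorem range_gradient {k : Type} [Field k] (F : MvPolynomial (Fin 3) k) :
    Set.range (fun i => pderiv i F) = {pderiv 0 F, pderiv 1 F, pderiv 2 F} := by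
  ext q
  simp [Fin.exists_fin_succ, eq_comm]

theorem gradient_linearIndependent {k : Type} [Field k] {F : MvPolynomial (Fin 3) k}
    {V : Submodule k (MvPolynomial (Fin 3) k)} (hV : IsNet V)
    (h : Submodule.span k (Set.range fun i => pderiv i F) = V) :
    LinearIndependent k fun i => pderiv i F := by
  rw [linearIndependent_iff_card_eq_finrank_span, Set.finrank, h, hV.2, Fintype.card_fin]

theorem eq_zero_of_gradient_eq_zero {k : Type} [Field k] [CharZero k]
    {F : MvPolynomial (Fin 3) k} (hF : F.IsHomogeneous 3) (h : ∀ i, pderiv i F = 0) : F = 0 := by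
  have := hF.sum_X_mul_pderiv
  simpa [h] using this.symm

/-- The nine unknowns `Bᵢₘ` satisfy nine linear equations expressing the vanishing of a curl, of
which one is redundant because the divergence of a curl is zero; hence a nonzero solution exists. -/
theorem exists_curl_free {k : Type} [Field k] (M : Fin 3 → Matrix (Fin 3) (Fin 3) k)
    (hM : ∀ m, (M m).IsSymm) :
    ∃ B : Matrix (Fin 3) (Fin 3) k, B ≠ 0 ∧
      ∀ i j l, ∑ m, B i m * M m j l = ∑ m, B j m * M m i l := by
  let e (i j l : Fin 3) : Matrix (Fin 3) (Fin 3) k →ₗ[k] k :=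
    { toFun := fun B => ∑ m, B i m * M m j l - ∑ m, B j m * M m i l
      map_add' := fun B B' => by
        simp only [Matrix.add_apply, add_mul, Finset.sum_add_distrib]; ring
      map_smul' := fun r B => by
        simp only [Matrix.smul_apply, smul_eq_mul, mul_assoc, ← Finset.mul_sum, mul_sub,
          RingHom.id_apply] }
  let L : Matrix (Fin 3) (Fin 3) k →ₗ[k] (Fin 8 → k) := LinearMap.pi
    ![e 0 1 0, e 0 1 1, e 0 1 2, e 0 2 0, e 0 2 1, e 0 2 2, e 1 2 1, e 1 2 2]
  have hL : LinearMap.ker L ≠ ⊥ := LinearMap.ker_ne_bot_of_finrank_lt (by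
    rw [Module.finrank_matrix]; simp)
  obtain ⟨B, hB, hB0⟩ := Submodule.exists_mem_ne_zero_of_ne_bot hL
  refine ⟨B, hB0, ?_⟩
  rw [LinearMap.mem_ker] at hB
  have h (n : Fin 8) := congrFun hB n
  have hM' : ∀ m a b, M m a b = M m b a := fun m a b => (hM m).apply b a
  have h0 := h 0
  have h1 := h 1
  have h2 := h 2
  have h3 := h 3
  have h4 := h 4
  have h5 := h 5
  have h6 := h 6
  have h7 := h 7
  simp [L, e, sub_eq_zero] at h0 h1 h2 h3 h4 h5 h6 h7
  -- the equation that was left out follows from the third and the fifth one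
  have h8 : ∑ m, B 1 m * M m 2 0 = ∑ m, B 2 m * M m 1 0 := by
    simp only [hM' _ 2 0, hM' _ 1 0]
    rw [← h2, ← h4]
    simp only [hM' _ 1 2]
  intro i j l
  fin_cases i <;> fin_cases j <;> fin_cases l <;> first | rfl | assumption | (symm; assumption)

/-- A curl-free triple of quadrics is the gradient of the cubic `(1/3) ∑ Xᵢ wᵢ`, by Euler's
identity. -/
theorem exists_potential {k : Type} [Field k] [CharZero k] {w : Fin 3 → MvPolynomial (Fin 3) k}
    (hw : ∀ i, (w i).IsHomogeneous 2)
    (hcurl : ∀ i j l, Mmat (w i) j l = Mmat (w j) i l) :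
    ∃ F : MvPolynomial (Fin 3) k, F.IsHomogeneous 3 ∧ ∀ i, pderiv i F = w i := by
  have hc : ∀ i j, pderiv j (w i) = pderiv i (w j) := fun i j => by
    rw [pderiv_quadric (hw i), pderiv_quadric (hw j)]
    refine Finset.sum_congr rfl fun l _ => ?_
    rw [(Mmat_isSymm (w i)).apply j l, (Mmat_isSymm (w j)).apply i l, hcurl]
  refine ⟨C (1/3) * ∑ i, X i * w i, ?_, fun j => ?_⟩
  · have : (∑ i, X i * w i).IsHomogeneous 3 :=
      IsHomogeneous.sum _ _ _ fun i _ => (isHomogeneous_X k i).mul (hw i)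
    simpa using (isHomogeneous_C (Fin 3) (1/3 : k)).mul this
  · have hE := (hw j).sum_X_mul_pderiv
    have : pderiv j (∑ i, X i * w i) = C 3 * w j := by
      simp only [map_sum, pderiv_mul, Finset.sum_add_distrib, hc _ j, hE, pderiv_X,
        Pi.single_apply, ite_mul, zero_mul, one_mul, Finset.sum_ite_eq',
        Finset.mem_univ, if_true, map_ofNat]
      rw [nsmul_eq_mul]; push_cast; ring
    rw [pderiv_C_mul, this, ← mul_assoc, ← C_mul]
    simp

theorem exists_jacobian {k : Type} [Field k] [IsAlgClosed k] [CharZero k]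
    {V : Submodule k (MvPolynomial (Fin 3) k)} (hV : IsNet V) (hdisc : HasSmoothDiscriminant V) :
    ∃ F ∈ homogeneousSubmodule (Fin 3) k 3,
      Submodule.span k (Set.range fun i => pderiv i F) = V := by
  have hfin : Module.Finite k V := Module.finite_of_finrank_pos (by rw [hV.2]; norm_num)
  let b := Module.finBasisOfFinrankEq k V hV.2
  let v : Fin 3 → MvPolynomial (Fin 3) k := fun i => b i
  have hvV : ∀ i, v i ∈ V := fun i => (b i).2
  have hli : LinearIndependent k v := b.linearIndependent.map' V.subtype V.ker_subtype
  have hle : ∀ u : Fin 3 → MvPolynomial (Fin 3) k, LinearIndependent k u → (∀ i, u i ∈ V) →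
      Submodule.span k (Set.range u) = V := fun u hu huV =>
    Submodule.eq_of_le_of_finrank_eq
      (Submodule.span_le.mpr (Set.range_subset_iff.mpr huV))
      (by rw [finrank_span_eq_card hu, hV.2, Fintype.card_fin])
  have hsm := smoothNet_of_basis hdisc hli (hle v hli hvV)
  obtain ⟨B, hB0, hB⟩ := exists_curl_free _ fun m => Mmat_isSymm (v m)
  let w : Fin 3 → MvPolynomial (Fin 3) k := fun i => ∑ m, B i m • v m
  have hwV : ∀ i, w i ∈ V := fun i =>
    Submodule.sum_mem _ fun m _ => Submodule.smul_mem _ _ (hvV m)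
  obtain ⟨F, hF, hFw⟩ := exists_potential (w := w) (fun i => hV.1 (hwV i)) fun i j l => by
    rw [Mmat_sum_apply (b := B i) (v := v) rfl, Mmat_sum_apply (b := B j) (v := v) rfl, hB]
  refine ⟨F, hF, ?_⟩
  simp only [hFw]
  refine hle _ ?_ hwV
  rw [Fintype.linearIndependent_iff]
  intro c hc
  by_contra hne
  refine hB0 (eq_zero_of_degenerate (fun m => Mmat_isSymm (v m)) hsm B hB (c := c)
    (fun h => hne fun i => congrFun h i) ?_)
  funext m
  refine Fintype.linearIndependent_iff.mp hli (Matrix.vecMul c B) ?_ m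
  rw [← hc]
  simp only [w, Matrix.vecMul, dotProduct, Finset.sum_smul, Finset.smul_sum, smul_smul]
  exact Finset.sum_comm

theorem jacobian_unique {k : Type} [Field k] [IsAlgClosed k] [CharZero k]
    {V : Submodule k (MvPolynomial (Fin 3) k)} (hV : IsNet V) (hdisc : HasSmoothDiscriminant V)
    {F G : MvPolynomial (Fin 3) k} (hF : F.IsHomogeneous 3) (hG : G.IsHomogeneous 3)
    (hFV : Submodule.span k (Set.range fun i => pderiv i F) = V)
    (hGV : ∀ i, pderiv i G ∈ V) : ∃ c : k, G = c • F := by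
  have hsm := smoothNet_of_basis hdisc (gradient_linearIndependent hV hFV) hFV
  have hex : ∀ i, ∃ b : Fin 3 → k, ∑ m, b m • pderiv m F = pderiv i G := fun i => by
    rw [← Submodule.mem_span_range_iff_exists_fun, hFV]; exact hGV i
  choose B hB using hex
  -- an eigenvalue `t` of the matrix expressing `∇G` in terms of `∇F`
  obtain ⟨t, ht⟩ := spectrum.nonempty_of_isAlgClosed_of_finiteDimensional k
    (Matrix.of B : Matrix (Fin 3) (Fin 3) k)
  rw [spectrum.mem_iff, Matrix.isUnit_iff_isUnit_det, isUnit_iff_ne_zero, not_not,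
    ← Matrix.exists_vecMul_eq_zero_iff] at ht
  obtain ⟨c, hc0, hc⟩ := ht
  set D := algebraMap k (Matrix (Fin 3) (Fin 3) k) t - Matrix.of B with hD
  have hDH : ∀ i, ∑ m, D i m • pderiv m F = pderiv i (t • F - G) := fun i => by
    simp [hD, sub_smul, Finset.sum_sub_distrib, hB, Matrix.algebraMap_matrix_apply, ite_smul]
  have hD0 := eq_zero_of_degenerate (fun m => Mmat_isSymm (pderiv m F)) hsm D (fun i j l => by
    rw [← Mmat_sum_apply (hDH i), ← Mmat_sum_apply (hDH j), Mmat_pderiv_swap]) hc0 hc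
  refine ⟨t, (sub_eq_zero.mp (eq_zero_of_gradient_eq_zero ?_ fun i => ?_)).symm⟩
  · exact (homogeneousSubmodule (Fin 3) k 3).sub_mem
      ((homogeneousSubmodule (Fin 3) k 3).smul_mem t hF) hG
  · rw [← hDH, hD0]; simp

/-! ### Smoothness, and exclusion of the Fermat cubic -/

theorem eval_quadric {k : Type} [Field k] {q : MvPolynomial (Fin 3) k}
    (hq : q.IsHomogeneous 2) (p : Fin 3 → k) :
    ∑ i, ∑ l, p i * p l * Mmat q i l = 2 * eval p q := by
  have := congrArg (eval p) hq.sum_X_mul_pderiv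
  simp only [pderiv_quadric hq, map_sum, map_mul, eval_X, eval_C, nsmul_eq_mul,
    Finset.mul_sum] at this
  rw [Finset.sum_comm]
  rw [Nat.cast_ofNat, map_ofNat] at this
  rw [← this]
  exact Finset.sum_congr rfl fun i _ => Finset.sum_congr rfl fun l _ => by ring

/-- The discriminant in the basis of partials is the Hessian of `F`, which is singular wherever `F`
is. -/
theorem jacobian_smooth {k : Type} [Field k] {F : MvPolynomial (Fin 3) k}
    (hF : F.IsHomogeneous 3) (hsm : SmoothNet fun m => Mmat (pderiv m F)) : IsSmooth F := by
  intro p hp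
  by_contra hp0
  obtain ⟨i, hi⟩ := Function.ne_iff.mp hp0
  refine hp0 (hsm p fun n => ?_)
  have hquad : ∀ j, ∑ m, ∑ l, p m * p l * Mmat (pderiv j F) m l = 0 := fun j => by
    rw [eval_quadric hF.pderiv, hp, mul_zero]
  have hNp : (∑ m, p m • Mmat (pderiv m F)).mulVec p = 0 := by
    funext j
    simp only [Matrix.mulVec, dotProduct, Matrix.sum_apply, Matrix.smul_apply, smul_eq_mul,
      Finset.sum_mul, Pi.zero_apply]
    rw [← hquad j, Finset.sum_comm]
    refine Finset.sum_congr rfl fun m _ => Finset.sum_congr rfl fun l _ => ?_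
    rw [Mmat_pderiv_swap F m j l]; ring
  have hN : (∑ m, p m • Mmat (pderiv m F)).IsSymm := by
    rw [← Mmat_sum]; exact Mmat_isSymm _
  refine (mul_eq_zero.mp ?_).resolve_left (mul_ne_zero hi hi)
  simp only [Matrix.trace, Matrix.diag, Matrix.mul_apply, Finset.mul_sum, ← mul_assoc,
    adjugate_rel hN hNp i]
  rw [← mul_zero ((∑ m, p m • Mmat (pderiv m F)).adjugate i i), ← hquad n]
  simp only [Finset.mul_sum]
  refine Finset.sum_congr rfl fun a _ => Finset.sum_congr rfl fun b _ => ?_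
  rw [(Mmat_isSymm (pderiv n F)).apply a b]; ring

/-- Transformation of the Hessian under a substitution: at `eₙ`, the Hessian matrix of `F ∘ g` is
`gᵀ N g`, where `N` is the Hessian matrix of `F` at `g eₙ`. -/
theorem Mmat_pderiv_subst {k : Type} [Field k] (g : Matrix (Fin 3) (Fin 3) k) (n : Fin 3)
    (F : MvPolynomial (Fin 3) k) :
    Mmat (pderiv n (subst g F)) =
      g.transpose * (∑ m, g m n • Mmat (pderiv m F)) * g := by
  ext a b
  simp only [Mmat, Matrix.of_apply, pderiv_subst, map_add, map_mul, pderiv_C_mul,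
    constantCoeff_C, constantCoeff_subst, Matrix.mul_apply, Matrix.add_apply, Matrix.smul_apply,
    Matrix.transpose_apply, smul_eq_mul, Fin.sum_univ_three]
  ring

/-- If `F ∘ g` is a Fermat cubic, its Hessian matrix at `e₀` has rank at most one, so the
discriminant of the net of partials of `F` is singular at the first column of `g`. -/
theorem jacobian_not_fermat {k : Type} [Field k] {F : MvPolynomial (Fin 3) k}
    (hsm : SmoothNet fun m => Mmat (pderiv m F)) :
    ¬ FormEquiv F (X 0 ^ 3 + X 1 ^ 3 + X 2 ^ 3) := by
  rintro ⟨g, hg, c, -, h⟩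
  have hdet : IsUnit g.det := (Matrix.isUnit_iff_isUnit_det g).mp hg
  have hM : Mmat (pderiv 0 (subst g F)) = Matrix.diagonal ![c * 6, 0, 0] := by
    rw [h]
    ext a b
    fin_cases a <;> fin_cases b <;>
      simp [Mmat, pderiv_X, Pi.single_apply, smul_eq_C_mul]
    left
    rw [map_ofNat, map_ofNat]
    norm_num
  have hadj := congrArg Matrix.adjugate (Mmat_pderiv_subst g 0 F)
  rw [hM, Matrix.adjugate_mul_distrib, Matrix.adjugate_mul_distrib, ← Matrix.adjugate_transpose]
    at hadj
  have hz : (Matrix.diagonal ![c * 6, 0, 0]).adjugate = 0 := by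
    ext a b
    rw [Matrix.adjugate_fin_three]
    fin_cases a <;> fin_cases b <;> simp
  rw [hz] at hadj
  have hu : IsUnit g.adjugate := by
    rw [Matrix.isUnit_iff_isUnit_det, Matrix.det_adjugate]; exact hdet.pow _
  have hN : (∑ m, g m 0 • Mmat (pderiv m F)).adjugate = 0 := by
    have h1 := (Matrix.isUnit_transpose g.adjugate).mpr hu
    have h2 := hu.mul_right_eq_zero.mp hadj.symm
    exact h1.mul_left_eq_zero.mp h2
  have h0 : (fun m => g m 0) = 0 := hsm _ fun i => by rw [hN]; simp
  exact hdet.ne_zero (Matrix.det_eq_zero_of_column_eq_zero 0 fun m => congrFun h0 m)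

/-- If a net of conics has smooth discriminant, then it is the span of the partial
derivatives of a cubic form `F`; any two such cubic forms are proportional; and any
such `F` is smooth and not equivalent to the Fermat cubic `X³ + Y³ + Z³`. -/
theorem smooth_discriminant_jacobian (k : Type) [Field k] [IsAlgClosed k] [CharZero k]
    (V : Submodule k (MvPolynomial (Fin 3) k)) (hV : IsNet V)
    (hdisc : HasSmoothDiscriminant V) :
    (∃ F ∈ homogeneousSubmodule (Fin 3) k 3,
        Submodule.span k {pderiv 0 F, pderiv 1 F, pderiv 2 F} = V) ∧
    (∀ F ∈ homogeneousSubmodule (Fin 3) k 3, ∀ G ∈ homogeneousSubmodule (Fin 3) k 3,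
        Submodule.span k {pderiv 0 F, pderiv 1 F, pderiv 2 F} = V →
        Submodule.span k {pderiv 0 G, pderiv 1 G, pderiv 2 G} = V →
        ∃ c : k, G = c • F) ∧
    (∀ F ∈ homogeneousSubmodule (Fin 3) k 3,
        Submodule.span k {pderiv 0 F, pderiv 1 F, pderiv 2 F} = V →
        IsSmooth F ∧ ¬ FormEquiv F (X 0 ^ 3 + X 1 ^ 3 + X 2 ^ 3)) := by
  simp only [← range_gradient, mem_homogeneousSubmodule]
  refine ⟨exists_jacobian hV hdisc, fun F hF G hG hFV hGV => ?_, fun F hF hFV => ?_⟩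
  · exact jacobian_unique hV hdisc hF hG hFV fun i =>
      hGV ▸ Submodule.subset_span (Set.mem_range_self i)
  · have hsm := smoothNet_of_basis hdisc (gradient_linearIndependent hV hFV) hFV
    exact ⟨jacobian_smooth hF hsm, jacobian_not_fermat hsm⟩

end Conics
end
end

section
/- For every α ∈ k with α ≠ 0 and α ≠ 1, the cubic form G = 3(α−1)²X²Y + 2α²Z³ − 3α(α+1)YZ² + 6αY²Z − (α+1)Y³ satisfies span{G_X, G_Y, G_Z} = span{YZ−X², (Y−Z)(Y−αZ), XY}. -/
open MvPolynomial

noncomputable section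

namespace Conics

/-!
Write `q₁ = YZ − X²`, `q₂ = (Y − Z)(Y − αZ)`, `q₃ = XY`. The partial derivatives of `G` are
`6(α−1)² q₃`, `−3(α−1)² q₁ − 3(α+1) q₂` and `6α q₂`. The matrix of this change of generators is
triangular up to reordering, with diagonal entries `6(α−1)²`, `−3(α−1)²`, `6α`. These are nonzero
because `α ≠ 0, 1` and the characteristic is zero, so the two spans coincide.
-/

/-- A triangular change of three generators with nonzero diagonal coefficients preserves the
span. -/
theorem span_triple_eq_of_triangular {k M : Type*} [Field k] [AddCommGroup M] [Module k M]
    (q₁ q₂ q₃ : M) {a b c d : k} (ha : a ≠ 0) (hb : b ≠ 0) (hd : d ≠ 0) :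
    Submodule.span k {a • q₃, b • q₁ + c • q₂, d • q₂} = Submodule.span k {q₁, q₂, q₃} := by
  apply le_antisymm
  · rw [Submodule.span_le]
    have m₁ : q₁ ∈ Submodule.span k {q₁, q₂, q₃} := Submodule.subset_span (by simp)
    have m₂ : q₂ ∈ Submodule.span k {q₁, q₂, q₃} := Submodule.subset_span (by simp)
    have m₃ : q₃ ∈ Submodule.span k {q₁, q₂, q₃} := Submodule.subset_span (by simp)
    rintro x (rfl | rfl | rfl)
    · exact Submodule.smul_mem _ _ m₃
    · exact Submodule.add_mem _ (Submodule.smul_mem _ _ m₁) (Submodule.smul_mem _ _ m₂)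
    · exact Submodule.smul_mem _ _ m₂
  · rw [Submodule.span_le]
    set S := Submodule.span k {a • q₃, b • q₁ + c • q₂, d • q₂} with hS
    have m₃ : q₃ ∈ S := (S.smul_mem_iff ha).1 (Submodule.subset_span (by simp))
    have m₂ : q₂ ∈ S := (S.smul_mem_iff hd).1 (Submodule.subset_span (by simp))
    have m₁ : q₁ ∈ S := (S.smul_mem_iff hb).1
      ((S.add_mem_iff_left (S.smul_mem c m₂)).1 (Submodule.subset_span (by simp)))
    rintro x (rfl | rfl | rfl)
    exacts [m₁, m₂, m₃]

/-- For `α ≠ 0, 1`, the partial derivatives of the cubic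
`G = 3(α−1)²X²Y + 2α²Z³ − 3α(α+1)YZ² + 6αY²Z − (α+1)Y³`
span the net `span{YZ − X², (Y − Z)(Y − αZ), XY}`
(here `X = X 0`, `Y = X 1`, `Z = X 2`). -/
theorem jacobian_of_explicit_cubic (k : Type) [Field k] [CharZero k]
    (α : k) (h0 : α ≠ 0) (h1 : α ≠ 1) :
    Submodule.span k
        {pderiv 0 (C (3 * (α - 1) ^ 2) * (X 0 ^ 2 * X 1) + C (2 * α ^ 2) * X 2 ^ 3
            - C (3 * α * (α + 1)) * (X 1 * X 2 ^ 2) + C (6 * α) * (X 1 ^ 2 * X 2)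
            - C (α + 1) * X 1 ^ 3),
          pderiv 1 (C (3 * (α - 1) ^ 2) * (X 0 ^ 2 * X 1) + C (2 * α ^ 2) * X 2 ^ 3
            - C (3 * α * (α + 1)) * (X 1 * X 2 ^ 2) + C (6 * α) * (X 1 ^ 2 * X 2)
            - C (α + 1) * X 1 ^ 3),
          pderiv 2 (C (3 * (α - 1) ^ 2) * (X 0 ^ 2 * X 1) + C (2 * α ^ 2) * X 2 ^ 3
            - C (3 * α * (α + 1)) * (X 1 * X 2 ^ 2) + C (6 * α) * (X 1 ^ 2 * X 2)
            - C (α + 1) * X 1 ^ 3)} =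
      Submodule.span k
        {X 1 * X 2 - X 0 ^ 2, (X 1 - X 2) * (X 1 - C α * X 2), X 0 * X 1} := by
  have hα : α - 1 ≠ 0 := sub_ne_zero.2 h1
  have ha : 6 * (α - 1) ^ 2 ≠ 0 := by simp [hα]
  have hb : -3 * (α - 1) ^ 2 ≠ 0 := by simp [hα]
  have hd : 6 * α ≠ 0 := by simp [h0]
  refine Eq.trans (congrArg _ ?_)
    (span_triple_eq_of_triangular (c := -3 * (α + 1)) _ _ _ ha hb hd)
  -- These identify the numeric constants `C n` with numerals, so that `ring` can combine them.
  have h2 : (C (2 : k) : MvPolynomial ℕ k) = 2 := map_ofNat C 2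
  have h3 : (C (3 : k) : MvPolynomial ℕ k) = 3 := map_ofNat C 3
  have h6 : (C (6 : k) : MvPolynomial ℕ k) = 6 := map_ofNat C 6
  congr 1
  · simp only [map_add, map_sub, pderiv_C, pderiv_mul, pderiv_pow, pderiv_X, smul_eq_C_mul]
    simp [h2, h3, h6]
    ring
  · congr 1
    · simp only [map_add, map_sub, pderiv_C, pderiv_mul, pderiv_pow, pderiv_X, smul_eq_C_mul]
      simp [h2, h3, h6]
      ring
    · congr 1
      simp only [map_add, map_sub, pderiv_C, pderiv_mul, pderiv_pow, pderiv_X, smul_eq_C_mul]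
      simp [h2, h3, h6]
      ring

end Conics
end
end

section
/- For λ ∈ k, the cubic form X³+Y³+Z³+3λXYZ has a common zero of its three partial derivatives at some nonzero point of k³ if and only if λ³ = −1. -/
/-! Up to the factor `3`, the partial derivatives at `(x, y, z)` are `x² + λyz`, `y² + λzx`,
`z² + λxy`. At a common zero, multiplying the relations `x² = -λyz`, etc. gives
`(1 + λ³)(xyz)² = 0`, and if one coordinate vanishes then so do the other two; hence a nonzero
common zero forces `λ³ = -1`. Conversely, if `λ³ = -1` then `(1, 1, λ²)` is a common zero. -/

open MvPolynomial

noncomputable section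

namespace Conics

/-- The three partial derivatives, divided by `3`. Characteristic zero makes the division
legitimate. -/
lemma pderiv_zero_iff {k : Type} [Field k] [CharZero k] (lam : k) (p : Fin 3 → k) :
    (∀ i : Fin 3, eval p (pderiv i (X 0 ^ 3 + X 1 ^ 3 + X 2 ^ 3
          + C (3 * lam) * (X 0 * X 1 * X 2))) = 0) ↔
      p 0 ^ 2 + lam * (p 1 * p 2) = 0 ∧ p 1 ^ 2 + lam * (p 2 * p 0) = 0 ∧
        p 2 ^ 2 + lam * (p 0 * p 1) = 0 := by
  have h3 : (3 : k) ≠ 0 := by norm_num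
  have cancel (a b : k) (h : a = 3 * b) : a = 0 ↔ b = 0 := by simp [h, h3]
  rw [Fin.forall_fin_succ, Fin.forall_fin_two]
  refine and_congr (cancel _ _ ?_) (and_congr (cancel _ _ ?_) (cancel _ _ ?_)) <;>
  · simp [pderiv_X, Derivation.leibniz_pow]
    ring

/-- The cubic `X³ + Y³ + Z³ + 3λXYZ` has a nonzero common zero of its three partial
derivatives if and only if `λ³ = −1`  (here `X = X 0`, `Y = X 1`, `Z = X 2`). -/
theorem hesse_cubic_singular_iff (k : Type) [Field k] [IsAlgClosed k] [CharZero k]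
    (lam : k) :
    (∃ p : Fin 3 → k, p ≠ 0 ∧ ∀ i : Fin 3,
        eval p (pderiv i (X 0 ^ 3 + X 1 ^ 3 + X 2 ^ 3
          + C (3 * lam) * (X 0 * X 1 * X 2))) = 0) ↔
      lam ^ 3 = -1 := by
  simp only [pderiv_zero_iff]
  constructor
  · rintro ⟨p, hp, h0, h1, h2⟩
    have key : (lam ^ 3 + 1) * (p 0 * p 1 * p 2) ^ 2 = 0 := by
      linear_combination p 1 ^ 2 * p 2 ^ 2 * h0 - lam * (p 1 * p 2) * p 2 ^ 2 * h1
        + lam ^ 2 * (p 1 * p 2) * (p 2 * p 0) * h2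
    rcases mul_eq_zero.mp key with h | h
    · exact eq_neg_of_add_eq_zero_left h
    · refine absurd ?_ hp
      have hz : p 0 = 0 ∧ p 1 = 0 ∧ p 2 = 0 := by
        rcases mul_eq_zero.mp (pow_eq_zero_iff two_ne_zero |>.mp h) with h | h
        · rcases mul_eq_zero.mp h with h | h <;> simp_all
        · simp_all
      funext i
      fin_cases i <;> simp [hz]
  · intro h
    refine ⟨![1, 1, lam ^ 2], fun hp => one_ne_zero (congrFun hp 0), ?_⟩
    refine ⟨?_, ?_, ?_⟩ <;> simp
    · linear_combination h
    · linear_combination h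
    · linear_combination lam * h

end Conics
end
end
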